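/- For every integer m ≥ 2 there is a constant μ ≥ 1 depending only on m such that for every nonempty closed set Z ⊊ ℝ^m there exists an m-dimensional simplicial complex Σ with Σ^{(m)} = ℝ^m ∖ Z satisfying the Whitney triangulation conclusions, and with the following property: for every j ∈ {1,…,m−1}, every (j+1)-simplex ω ∈ Σ, any two j-faces ω₁ and ω₂ of ω, and any points x ∈ ω₁ and y ∈ ω₂, there exists a point v ∈ ω₁ ∩ ω₂ such that |x−v| + |v−y| ≤ μ|x−y|. -/

import Mathlib

open MeasureTheory Metric Set
noncomputable section

/-- `Euc d` is `ℝ^d` with the Euclidean metric. -/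
abbrev Euc (d : ℕ) := EuclideanSpace ℝ (Fin d)

/-- The `k`-skeleton (as a subset of `ℝ^m`) of a simplicial complex: the union of all of
its `k`-simplices (faces with `k+1` vertices). -/
def skel (m : ℕ) (K : Geometry.SimplicialComplex ℝ (Euc m)) (k : ℕ) : Set (Euc m) :=
  ⋃ s ∈ {s ∈ K.faces | s.card = k + 1}, convexHull ℝ (s : Set (Euc m))

/-- The diameter of the simplex spanned by the vertex set `s`. -/
def simpDiam (m : ℕ) (s : Finset (Euc m)) : ℝ :=
  Metric.diam (convexHull ℝ (s : Set (Euc m)))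

/-- The distance between two subsets of `ℝ^m`. -/
def setDist (m : ℕ) (A B : Set (Euc m)) : ℝ :=
  sInf (Set.image2 dist A B)

/-- `β(ω)` for the simplex with vertex set `ω`: the minimum distance from the barycenter
of `ω` to an affine plane spanned by a face of codimension one. -/
def faceBetaMin (m : ℕ) (ω : Finset (Euc m)) : ℝ :=
  sInf { d | ∃ t ⊆ ω, t.card = ω.card - 1 ∧
    d = Metric.infDist (ω.centroid ℝ id)
          ((affineSpan ℝ (t : Set (Euc m)) : AffineSubspace ℝ (Euc m)) : Set (Euc m)) }

/-- `B(ω)` for the simplex with vertex set `ω`: the maximum distance from the barycenter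
of `ω` to an affine plane spanned by a face of codimension one. -/
def faceBetaMax (m : ℕ) (ω : Finset (Euc m)) : ℝ :=
  sSup { d | ∃ t ⊆ ω, t.card = ω.card - 1 ∧
    d = Metric.infDist (ω.centroid ℝ id)
          ((affineSpan ℝ (t : Set (Euc m)) : AffineSubspace ℝ (Euc m)) : Set (Euc m)) }

/-- `β_σ`: the minimum of `β(ω)` over all faces `ω` of `σ` of dimension `≥ 1`. -/
def betaLow (m : ℕ) (σ : Finset (Euc m)) : ℝ :=
  sInf { b | ∃ ω ⊆ σ, 2 ≤ ω.card ∧ b = faceBetaMin m ω }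

/-- `B_σ`: the maximum of `B(ω)` over all faces `ω` of `σ` of dimension `≥ 1`. -/
def betaHigh (m : ℕ) (σ : Finset (Euc m)) : ℝ :=
  sSup { b | ∃ ω ⊆ σ, 2 ≤ ω.card ∧ b = faceBetaMax m ω }

/-- The conclusions of the Whitney triangulation lemma for the closed set `Z ⊂ ℝ^m`:
`K` is an `m`-dimensional simplicial complex whose `m`-skeleton is `ℝ^m ∖ Z`, all of
whose `m`-simplices `σ` satisfy `diam σ ≤ dist(σ,Z) ≤ 12√m diam σ` and
`D₁ < diam σ / B_σ ≤ diam σ / β_σ < D₂`. -/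
def WhitneyConclusions (m : ℕ) (D₁ D₂ : ℝ) (Z : Set (Euc m))
    (K : Geometry.SimplicialComplex ℝ (Euc m)) : Prop :=
  (∀ s ∈ K.faces, s.card ≤ m + 1) ∧
  skel m K m = Zᶜ ∧
  ∀ σ ∈ K.faces, σ.card = m + 1 →
    simpDiam m σ ≤ setDist m (convexHull ℝ (σ : Set (Euc m))) Z ∧
    setDist m (convexHull ℝ (σ : Set (Euc m))) Z ≤ 12 * Real.sqrt m * simpDiam m σ ∧
    D₁ < simpDiam m σ / betaHigh m σ ∧
    simpDiam m σ / betaHigh m σ ≤ simpDiam m σ / betaLow m σ ∧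
    simpDiam m σ / betaLow m σ < D₂

/-! Cut `ℝ^m ∖ Z` into dyadic cells whose size at each point is comparable to the distance to `Z`.
Neighbouring cells differ in size by a factor at most two, so coning every cell, in order of
increasing dimension, from its centre over its already triangulated boundary gives a triangulation,
whose simplices are the flags of cell centres. Rescaled by the size of its largest cell and
translated to the centre of that cell, a flag has its vertices in a fixed finite subset of
`(1/4)ℤ^m`, so up to similarity only finitely many simplices occur: heights, diameters and
distances to `Z` are comparable with constants depending only on `m`. For the face path, a lower
bound on the heights of a simplex bounds the angle between two of its facets from below. -/

section OrderCell

/-- The closed cell of `s` in the subdivision of `α` cut out by `G`; the points of the relatively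
open cell of `s` are those whose closed cell is that of `s`. -/
def orderCell {α : Type*} [Preorder α] (G : Set α) (s : α) : Set α :=
  {t | ∀ g ∈ G, (g ≤ s → g ≤ t) ∧ (s ≤ g → t ≤ g)}

variable {α : Type*}

lemma self_mem_orderCell [Preorder α] (G : Set α) (s : α) : s ∈ orderCell G s :=
  fun _ _ => ⟨id, id⟩

lemma orderCell_subset_orderCell [Preorder α] {G : Set α} {s t : α} (h : t ∈ orderCell G s) :
    orderCell G t ⊆ orderCell G s :=
  fun _ hu g hg => ⟨(hu g hg).1 ∘ (h g hg).1, (hu g hg).2 ∘ (h g hg).2⟩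

lemma orderCell_anti [Preorder α] {G H : Set α} (hGH : G ⊆ H) (s : α) :
    orderCell H s ⊆ orderCell G s :=
  fun _ ht g hg => ht g (hGH hg)

lemma eq_of_mem_orderCell [PartialOrder α] {G : Set α} {s t : α} (hs : s ∈ G)
    (h : t ∈ orderCell G s) : t = s :=
  ((h s hs).2 le_rfl).antisymm ((h s hs).1 le_rfl)

lemma orderCell_eq_of_notMem [LinearOrder α] {G : Set α} {s t : α} (h : t ∈ orderCell G s)
    (ht : t ∉ G) : orderCell G t = orderCell G s := by
  refine (orderCell_subset_orderCell h).antisymm (orderCell_subset_orderCell fun g hg => ⟨?_, ?_⟩)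
  · exact fun hgt => le_of_not_gt fun hsg => ht (hgt.antisymm ((h g hg).2 hsg.le) ▸ hg)
  · exact fun htg => le_of_not_gt fun hgs => ht (htg.antisymm ((h g hg).1 hgs.le) ▸ hg)

lemma mem_of_orderCell_eq [PartialOrder α] {G : Set α} {s t : α}
    (h : orderCell G s = orderCell G t) (hs : s ∈ G) : t ∈ G :=
  eq_of_mem_orderCell hs (h ▸ self_mem_orderCell G t) ▸ hs

lemma convex_orderCell (G : Set ℝ) (s : ℝ) : Convex ℝ (orderCell G s) := by
  simp only [orderCell, ofPred_forall, ofPred_and]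
  exact convex_iInter₂ fun g _ => (convex_iInter fun _ => convex_Ici g).inter
    (convex_iInter fun _ => convex_Iic g)

lemma orderCell_eq_of_mem_openSegment {G : Set ℝ} {s t r : ℝ} (ht : t ∈ orderCell G s)
    (hr : r ∈ openSegment ℝ s t) : orderCell G r = orderCell G s := by
  refine (orderCell_subset_orderCell ?_).antisymm
    (orderCell_subset_orderCell fun g hg => ⟨fun hgr => ?_, fun hrg => ?_⟩)
  · exact (convex_orderCell G s).openSegment_subset (self_mem_orderCell G s) ht hr
  all_goals
    obtain ⟨a, b, ha, hb, hab, rfl⟩ := hr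
    by_contra! hlt
    have hab' : a * g + b * g = g := by rw [← add_mul, hab, one_mul]
    simp only [smul_eq_mul] at *
  · linarith [mul_lt_mul_of_pos_left hlt ha, mul_le_mul_of_nonneg_left ((ht g hg).2 hlt.le) hb.le]
  · linarith [mul_lt_mul_of_pos_left hlt ha, mul_le_mul_of_nonneg_left ((ht g hg).1 hlt.le) hb.le]

end OrderCell

section DyadicGrid

/-- The grid `2⁻ᵏ ℤ` of dyadic reals of level `k`. -/
def dyadicGrid (k : ℤ) : AddSubgroup ℝ := AddSubgroup.zmultiples ((2 : ℝ) ^ (-k))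

variable {k l : ℤ} {a c s t : ℝ}

lemma mem_dyadicGrid_iff : t ∈ dyadicGrid k ↔ ∃ z : ℤ, z * (2 : ℝ) ^ (-k) = t := by
  simp only [dyadicGrid, AddSubgroup.mem_zmultiples_iff, zsmul_eq_mul]

lemma two_zpow_neg_add_one (k : ℤ) : (2 : ℝ) ^ (-(k + 1)) = 2 ^ (-k) / 2 := by
  rw [neg_add, zpow_add₀ two_ne_zero, zpow_neg_one, div_eq_mul_inv]

lemma two_zpow_neg_mem_dyadicGrid (h : k ≤ l) : (2 : ℝ) ^ (-k) ∈ dyadicGrid l := by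
  lift l - k to ℕ using sub_nonneg.2 h with j hj
  refine mem_dyadicGrid_iff.2 ⟨2 ^ j, ?_⟩
  rw [Int.cast_pow, Int.cast_ofNat, ← zpow_natCast, ← zpow_add₀ two_ne_zero, hj]
  congr 1
  ring

lemma dyadicGrid_mono (h : k ≤ l) : dyadicGrid k ≤ dyadicGrid l :=
  AddSubgroup.zmultiples_le_of_mem (two_zpow_neg_mem_dyadicGrid h)

lemma add_two_zpow_le_of_lt (hs : s ∈ dyadicGrid k) (ht : t ∈ dyadicGrid k) (hst : s < t) :
    s + 2 ^ (-k) ≤ t := by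
  obtain ⟨y, rfl⟩ := mem_dyadicGrid_iff.1 hs
  obtain ⟨z, rfl⟩ := mem_dyadicGrid_iff.1 ht
  have hpos : (0 : ℝ) < 2 ^ (-k) := by positivity
  have hyz : (y : ℝ) + 1 ≤ z := by
    exact_mod_cast Int.cast_lt.1 (lt_of_mul_lt_mul_right hst hpos.le)
  calc (y : ℝ) * 2 ^ (-k) + 2 ^ (-k) = (y + 1) * 2 ^ (-k) := by ring
    _ ≤ z * 2 ^ (-k) := by gcongr

lemma exists_mem_dyadicGrid_Ico (k : ℤ) (t : ℝ) :
    ∃ a ∈ dyadicGrid k, t ∈ Ico a (a + 2 ^ (-k)) := by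
  obtain ⟨z, hz, -⟩ := existsUnique_zsmul_near_of_pos (a := (2 : ℝ) ^ (-k)) (by positivity) t
  exact ⟨z • 2 ^ (-k), ⟨z, rfl⟩, hz.1, by simpa only [add_smul, one_smul] using hz.2⟩

lemma notMem_dyadicGrid_of_mem_Ioo (ha : a ∈ dyadicGrid k) (ht : t ∈ Ioo a (a + 2 ^ (-k))) :
    t ∉ dyadicGrid k :=
  fun h => ht.2.not_ge (add_two_zpow_le_of_lt ha h ht.1)

lemma orderCell_dyadicGrid_eq_Icc (ha : a ∈ dyadicGrid k) (ht : t ∈ Ioo a (a + 2 ^ (-k))) :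
    orderCell (dyadicGrid k) t = Icc a (a + 2 ^ (-k)) := by
  have hb : a + 2 ^ (-k) ∈ dyadicGrid k := add_mem ha (two_zpow_neg_mem_dyadicGrid le_rfl)
  refine Subset.antisymm (fun s hs => ⟨(hs a ha).1 ht.1.le, (hs _ hb).2 ht.2.le⟩) ?_
  refine fun s hs g hg => ⟨fun hgt => ?_, fun htg => ?_⟩
  · refine le_trans (le_of_not_gt fun hag => ?_) hs.1
    linarith [add_two_zpow_le_of_lt ha hg hag, ht.2]
  · exact hs.2.trans (add_two_zpow_le_of_lt ha hg (ht.1.trans_le htg))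

lemma exists_mem_dyadicGrid_Ioo (ht : t ∉ dyadicGrid k) :
    ∃ a ∈ dyadicGrid k, t ∈ Ioo a (a + 2 ^ (-k)) := by
  obtain ⟨a, ha, hat, hta⟩ := exists_mem_dyadicGrid_Ico k t
  exact ⟨a, ha, hat.lt_of_ne (fun h => ht (h ▸ ha)), hta⟩

lemma add_half_mem_Ioo (a : ℝ) (k : ℤ) : a + 2 ^ (-k) / 2 ∈ Ioo a (a + 2 ^ (-k)) := by
  have : (0 : ℝ) < 2 ^ (-k) := by positivity
  constructor <;> linarith

lemma add_half_mem_dyadicGrid_succ (ha : a ∈ dyadicGrid k) :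
    a + 2 ^ (-k) / 2 ∈ dyadicGrid (k + 1) :=
  add_mem (dyadicGrid_mono (by lia) ha)
    (two_zpow_neg_add_one k ▸ two_zpow_neg_mem_dyadicGrid le_rfl)

lemma eq_add_half_of_mem_Ioo (ha : a ∈ dyadicGrid k) (hc : c ∈ dyadicGrid (k + 1))
    (hac : c ∈ Ioo a (a + 2 ^ (-k))) : c = a + 2 ^ (-k) / 2 := by
  have ha' := dyadicGrid_mono (Int.le_add_one le_rfl) ha
  have hle := add_two_zpow_le_of_lt ha' hc hac.1
  have hge := add_two_zpow_le_of_lt hc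
    (add_mem ha' (two_zpow_neg_mem_dyadicGrid (Int.le_add_one le_rfl))) hac.2
  rw [two_zpow_neg_add_one] at hle hge
  linarith

lemma exists_orderCell_dyadicGrid_eq (k : ℤ) (t : ℝ) :
    ∃ c ∈ dyadicGrid (k + 1), orderCell (dyadicGrid k) c = orderCell (dyadicGrid k : Set ℝ) t := by
  by_cases ht : t ∈ dyadicGrid k
  · exact ⟨t, dyadicGrid_mono (by lia) ht, rfl⟩
  · obtain ⟨a, ha, hat⟩ := exists_mem_dyadicGrid_Ioo ht
    refine ⟨a + 2 ^ (-k) / 2, add_half_mem_dyadicGrid_succ ha, ?_⟩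
    rw [orderCell_dyadicGrid_eq_Icc ha hat, orderCell_dyadicGrid_eq_Icc ha (add_half_mem_Ioo a k)]

lemma orderCell_dyadicGrid_eq_closedBall (hc : c ∈ dyadicGrid (k + 1)) (hck : c ∉ dyadicGrid k) :
    orderCell (dyadicGrid k) c = closedBall c (2 ^ (-k) / 2) := by
  obtain ⟨a, ha, hac⟩ := exists_mem_dyadicGrid_Ioo hck
  rw [orderCell_dyadicGrid_eq_Icc ha hac, eq_add_half_of_mem_Ioo ha hc hac, Real.closedBall_eq_Icc]
  congr 1 <;> ring

lemma mem_dyadicGrid_iff_dist_eq (hc : c ∈ dyadicGrid (k + 1)) (hck : c ∉ dyadicGrid k)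
    (ht : t ∈ orderCell (dyadicGrid k) c) : t ∈ dyadicGrid k ↔ dist t c = 2 ^ (-k) / 2 := by
  obtain ⟨a, ha, hac⟩ := exists_mem_dyadicGrid_Ioo hck
  obtain rfl := eq_add_half_of_mem_Ioo ha hc hac
  rw [orderCell_dyadicGrid_eq_Icc ha hac] at ht
  rw [Real.dist_eq, abs_eq (by positivity)]
  refine ⟨fun htk => ?_, ?_⟩
  · have hmem : t ∉ Ioo a (a + 2 ^ (-k)) := fun h => notMem_dyadicGrid_of_mem_Ioo ha h htk
    rcases ht.1.eq_or_lt with rfl | hat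
    · right; ring
    · left
      linarith [ht.2.antisymm (le_of_not_gt fun h => hmem ⟨hat, h⟩)]
  · rintro (h | h)
    · rw [show t = a + 2 ^ (-k) by linarith]
      exact add_mem ha (two_zpow_neg_mem_dyadicGrid le_rfl)
    · rwa [show t = a by linarith]

lemma dist_le_of_mem_orderCell_dyadicGrid (hc : c ∈ dyadicGrid (k + 1))
    (ht : t ∈ orderCell (dyadicGrid k) c) : dist t c ≤ 2 ^ (-k) / 2 := by
  by_cases hck : c ∈ dyadicGrid k
  · rw [eq_of_mem_orderCell hck ht, dist_self]
    positivity
  · rwa [orderCell_dyadicGrid_eq_closedBall hc hck] at ht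

lemma dist_le_of_mem_orderCell (hs : s ∈ orderCell (dyadicGrid k) c)
    (ht : t ∈ orderCell (dyadicGrid k) c) : dist s t ≤ 2 ^ (-k) := by
  obtain ⟨c', hc', h⟩ := exists_orderCell_dyadicGrid_eq k c
  rw [← h] at hs ht
  linarith [dist_triangle_right s t c', dist_le_of_mem_orderCell_dyadicGrid hc' hs,
    dist_le_of_mem_orderCell_dyadicGrid hc' ht]

lemma eq_of_orderCell_dyadicGrid_eq (hs : s ∈ dyadicGrid (k + 1)) (ht : t ∈ dyadicGrid (k + 1))
    (h : orderCell (dyadicGrid k) s = orderCell (dyadicGrid k : Set ℝ) t) : s = t := by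
  by_cases hsk : s ∈ dyadicGrid k
  · exact (eq_of_mem_orderCell hsk (h ▸ self_mem_orderCell _ t)).symm
  obtain ⟨a, ha, has⟩ := exists_mem_dyadicGrid_Ioo hsk
  have hta : t ∈ Icc a (a + 2 ^ (-k)) :=
    orderCell_dyadicGrid_eq_Icc ha has ▸ h ▸ self_mem_orderCell _ t
  have htk : t ∉ dyadicGrid k :=
    fun htk => hsk (eq_of_mem_orderCell htk (h ▸ self_mem_orderCell _ s) ▸ htk)
  have hta' : t ∈ Ioo a (a + 2 ^ (-k)) :=
    ⟨hta.1.lt_of_ne fun e => htk (e ▸ ha), hta.2.lt_of_ne fun e =>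
      htk (e ▸ add_mem ha (two_zpow_neg_mem_dyadicGrid le_rfl))⟩
  rw [eq_add_half_of_mem_Ioo ha hs has, eq_add_half_of_mem_Ioo ha ht hta']

lemma exists_notMem_dyadicGrid_mem_orderCell (k : ℤ) (t : ℝ) :
    ∃ r ∉ dyadicGrid k, t ∈ orderCell (dyadicGrid k) r := by
  obtain ⟨a, ha, hat⟩ := exists_mem_dyadicGrid_Ico k t
  refine ⟨a + 2 ^ (-k) / 2, notMem_dyadicGrid_of_mem_Ioo ha (add_half_mem_Ioo a k), ?_⟩
  exact orderCell_dyadicGrid_eq_Icc ha (add_half_mem_Ioo a k) ▸ Ico_subset_Icc_self hat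

lemma exists_dyadicGrid_Icc_subset (hkl : k ≤ l) (ha : a ∈ dyadicGrid k)
    (ht : t ∈ Icc a (a + 2 ^ (-k))) :
    ∃ b ∈ dyadicGrid l, t ∈ Icc b (b + 2 ^ (-l)) ∧ Icc b (b + 2 ^ (-l)) ⊆ Icc a (a + 2 ^ (-k)) := by
  have hal := dyadicGrid_mono hkl ha
  have hbl := add_mem hal (two_zpow_neg_mem_dyadicGrid hkl)
  rcases ht.2.eq_or_lt with rfl | hlt
  · refine ⟨a + 2 ^ (-k) - 2 ^ (-l), sub_mem hbl (two_zpow_neg_mem_dyadicGrid le_rfl), ?_, ?_⟩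
    · simp only [sub_add_cancel, mem_Icc, le_refl, and_true, sub_le_self_iff]
      positivity
    · refine Icc_subset_Icc ?_ (sub_add_cancel _ _).le
      linarith [add_two_zpow_le_of_lt hal hbl (lt_add_of_pos_right a (by positivity))]
  · obtain ⟨b, hb, hbt⟩ := exists_mem_dyadicGrid_Ico l t
    refine ⟨b, hb, Ico_subset_Icc_self hbt, Icc_subset_Icc (le_of_not_gt fun hba => ?_)
      (add_two_zpow_le_of_lt hb hbl (hbt.1.trans_lt hlt))⟩
    linarith [add_two_zpow_le_of_lt hb hal hba, ht.1, hbt.2]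

lemma exists_notMem_dyadicGrid_mem_orderCell_of_le (hkl : k ≤ l) (hs : s ∉ dyadicGrid k)
    (ht : t ∈ orderCell (dyadicGrid k) s) :
    ∃ r ∈ orderCell (dyadicGrid k) s, r ∉ dyadicGrid l ∧ t ∈ orderCell (dyadicGrid l) r := by
  obtain ⟨a, ha, has⟩ := exists_mem_dyadicGrid_Ioo hs
  rw [orderCell_dyadicGrid_eq_Icc ha has] at ht ⊢
  obtain ⟨b, hb, hbt, hsub⟩ := exists_dyadicGrid_Icc_subset hkl ha ht
  have hmid := add_half_mem_Ioo b l
  exact ⟨_, hsub (Ioo_subset_Icc_self hmid), notMem_dyadicGrid_of_mem_Ioo hb hmid,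
    orderCell_dyadicGrid_eq_Icc hb hmid ▸ hbt⟩

end DyadicGrid

section DyadicCell

variable {ι : Type*} {k l : ℤ} {x y z : EuclideanSpace ℝ ι}

/-- The closed cell of `x` in the partition of `ℝ^ι` into relatively open faces of dyadic cubes of
side `2⁻ᵏ`. -/
def dyadicCell (k : ℤ) (x : EuclideanSpace ℝ ι) : Set (EuclideanSpace ℝ ι) :=
  {y | ∀ i, y i ∈ orderCell (dyadicGrid k) (x i)}

lemma self_mem_dyadicCell (k : ℤ) (x : EuclideanSpace ℝ ι) : x ∈ dyadicCell k x :=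
  fun i => self_mem_orderCell _ (x i)

lemma dyadicCell_subset_dyadicCell (h : y ∈ dyadicCell k x) : dyadicCell k y ⊆ dyadicCell k x :=
  fun _ hz i => orderCell_subset_orderCell (h i) (hz i)

lemma dyadicCell_eq (hxy : y ∈ dyadicCell k x) (hyx : x ∈ dyadicCell k y) :
    dyadicCell k y = dyadicCell k x :=
  (dyadicCell_subset_dyadicCell hxy).antisymm (dyadicCell_subset_dyadicCell hyx)

lemma orderCell_eq_of_dyadicCell_eq (h : dyadicCell k x = dyadicCell k y) (i : ι) :
    orderCell (dyadicGrid k) (x i) = orderCell (dyadicGrid k : Set ℝ) (y i) :=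
  (orderCell_subset_orderCell ((h ▸ self_mem_dyadicCell k x : x ∈ dyadicCell k y) i)).antisymm
    (orderCell_subset_orderCell ((h ▸ self_mem_dyadicCell k y : y ∈ dyadicCell k x) i))

lemma dyadicCell_anti (h : k ≤ l) (x : EuclideanSpace ℝ ι) : dyadicCell l x ⊆ dyadicCell k x :=
  fun _ hy i => orderCell_anti (dyadicGrid_mono h) (x i) (hy i)

lemma convex_dyadicCell (k : ℤ) (x : EuclideanSpace ℝ ι) : Convex ℝ (dyadicCell k x) :=
  fun _ hy _ hz _ _ ha hb hab i => convex_orderCell _ (x i) (hy i) (hz i) ha hb hab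

lemma dyadicCell_eq_of_mem_openSegment (hy : y ∈ dyadicCell k x) (hz : z ∈ openSegment ℝ x y) :
    dyadicCell k z = dyadicCell k x := by
  have hcoord : ∀ i, orderCell (dyadicGrid k : Set ℝ) (z i) = orderCell (dyadicGrid k) (x i) := by
    intro i
    obtain ⟨a, b, ha, hb, hab, rfl⟩ := hz
    exact orderCell_eq_of_mem_openSegment (hy i) ⟨a, b, ha, hb, hab, rfl⟩
  simp only [dyadicCell, hcoord]

lemma exists_mem_dyadicCell_coord (hkl : k ≤ l) (hy : y ∈ dyadicCell k x) {i : ι}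
    (hyi : y i ∈ dyadicGrid k) :
    ∃ z ∈ dyadicCell k x, y ∈ dyadicCell l z ∧
      (∀ j, j = i ∨ x j ∈ dyadicGrid k → z j ∈ dyadicGrid k) ∧
        ∀ j, j ≠ i → x j ∉ dyadicGrid k → z j ∉ dyadicGrid l := by
  have hcoord : ∀ j, ∃ r ∈ orderCell (dyadicGrid k) (x j), y j ∈ orderCell (dyadicGrid l) r ∧
      (j = i ∨ x j ∈ dyadicGrid k → r ∈ dyadicGrid k) ∧
        (j ≠ i → x j ∉ dyadicGrid k → r ∉ dyadicGrid l) := by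
    intro j
    by_cases hj : j = i ∨ x j ∈ dyadicGrid k
    · refine ⟨y j, hy j, self_mem_orderCell _ _, fun _ => ?_,
        fun hji hxj => (hj.elim hji hxj).elim⟩
      rcases hj with rfl | hxj
      · exact hyi
      · exact eq_of_mem_orderCell hxj (hy j) ▸ hxj
    · obtain ⟨r, hr, hrl, hyr⟩ :=
        exists_notMem_dyadicGrid_mem_orderCell_of_le hkl (not_or.1 hj).2 (hy j)
      exact ⟨r, hr, hyr, fun h => (hj h).elim, fun _ _ => hrl⟩
  choose r hrx hyr hr hr' using hcoord
  exact ⟨WithLp.toLp 2 r, hrx, hyr, hr, hr'⟩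

end DyadicCell

section CellScale

variable {ι : Type*} {U : Set (EuclideanSpace ℝ ι)} {n : EuclideanSpace ℝ ι → ℤ}
  {p q u v w x y : EuclideanSpace ℝ ι}

/-- A choice of dyadic level at each point of `U` such that the cells `dyadicCell (n x) x` form a
complex subdividing `U`, whose cubes shrink when passing to faces. -/
structure IsCellScale (U : Set (EuclideanSpace ℝ ι)) (n : EuclideanSpace ℝ ι → ℤ) : Prop where
  mem_of_mem : ∀ {x y}, x ∈ U → y ∈ dyadicCell (n x) x → y ∈ U
  mem_of_mem_coface : ∀ {x y}, x ∈ U → x ∈ dyadicCell (n x) y → y ∈ U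
  le_of_mem_coface : ∀ {x y}, x ∈ U → x ∈ dyadicCell (n x) y → n y ≤ n x

/-- `v` is the barycentre of its own cell: each coordinate is a point of the grid or the midpoint of
a grid interval, that is, a point of the next finer grid. -/
structure IsCellCenter (U : Set (EuclideanSpace ℝ ι)) (n : EuclideanSpace ℝ ι → ℤ)
    (v : EuclideanSpace ℝ ι) : Prop where
  mem : v ∈ U
  coord_mem : ∀ i, v i ∈ dyadicGrid (n v + 1)

/-- The relative boundary of the closed cell of `v`. -/
def cellBoundary (n : EuclideanSpace ℝ ι → ℤ) (v : EuclideanSpace ℝ ι) :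
    Set (EuclideanSpace ℝ ι) :=
  {p ∈ dyadicCell (n v) v | v ∉ dyadicCell (n v) p}

open Classical in
/-- The coordinate directions spanned by the cell of `v`; their number is its dimension. -/
def freeDirections [Fintype ι] (n : EuclideanSpace ℝ ι → ℤ) (v : EuclideanSpace ℝ ι) : Finset ι :=
  {i | v i ∉ dyadicGrid (n v)}

lemma mem_freeDirections [Fintype ι] {i : ι} :
    i ∈ freeDirections n v ↔ v i ∉ dyadicGrid (n v) := by
  simp only [freeDirections, Finset.mem_filter_univ]

namespace IsCellScale

lemma le_of_mem (hU : IsCellScale U n) (hx : x ∈ U) (hy : y ∈ dyadicCell (n x) x) : n x ≤ n y := by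
  by_contra! hlt
  exact hlt.not_ge (hU.le_of_mem_coface (hU.mem_of_mem hx hy) (dyadicCell_anti hlt.le x hy))

lemma cell_subset_cell (hU : IsCellScale U n) (hx : x ∈ U) (hy : y ∈ dyadicCell (n x) x) :
    dyadicCell (n y) y ⊆ dyadicCell (n x) x :=
  (dyadicCell_anti (hU.le_of_mem hx hy) y).trans (dyadicCell_subset_dyadicCell hy)

lemma eq_of_dyadicCell_eq (hU : IsCellScale U n) (hx : x ∈ U)
    (h : dyadicCell (n x) y = dyadicCell (n x) x) : n y = n x :=
  (hU.le_of_mem_coface hx (h ▸ self_mem_dyadicCell _ x)).antisymm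
    (hU.le_of_mem hx (h ▸ self_mem_dyadicCell _ y))

lemma exists_isCellCenter (hU : IsCellScale U n) (hx : x ∈ U) :
    ∃ v, IsCellCenter U n v ∧ n v = n x ∧ dyadicCell (n x) v = dyadicCell (n x) x := by
  choose c hc hcx using fun i => exists_orderCell_dyadicGrid_eq (n x) (x i)
  have hcell : dyadicCell (n x) (WithLp.toLp 2 c) = dyadicCell (n x) x := by
    simp only [dyadicCell, hcx]
  have hn := hU.eq_of_dyadicCell_eq hx hcell
  exact ⟨_, ⟨hU.mem_of_mem hx (hcell ▸ self_mem_dyadicCell _ _), fun i => hn ▸ hc i⟩, hn, hcell⟩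

end IsCellScale

lemma exists_mem_dyadicGrid_of_mem_cellBoundary (hp : p ∈ cellBoundary n v) :
    ∃ i, v i ∉ dyadicGrid (n v) ∧ p i ∈ dyadicGrid (n v) := by
  obtain ⟨i, hi⟩ := not_forall.1 hp.2
  refine ⟨i, fun hv => ?_, ?_⟩
  · exact hi (eq_of_mem_orderCell hv (hp.1 i) ▸ self_mem_orderCell _ _)
  · by_contra hpi
    exact hi (orderCell_eq_of_notMem (hp.1 i) hpi ▸ self_mem_orderCell _ _)

namespace IsCellCenter

lemma eq_of_dyadicCell_eq (hU : IsCellScale U n) (hu : IsCellCenter U n u)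
    (hv : IsCellCenter U n v) (h : dyadicCell (n v) u = dyadicCell (n v) v) : u = v := by
  have hn := hU.eq_of_dyadicCell_eq hv.mem h
  ext i
  exact eq_of_orderCell_dyadicGrid_eq (hn ▸ hu.coord_mem i) (hv.coord_mem i)
    (orderCell_eq_of_dyadicCell_eq h i)

lemma eq_of_mem_of_mem (hU : IsCellScale U n) (hu : IsCellCenter U n u) (hv : IsCellCenter U n v)
    (huv : u ∈ dyadicCell (n v) v) (hvu : v ∈ dyadicCell (n u) u) : u = v := by
  have hn := (hU.le_of_mem hv.mem huv).antisymm (hU.le_of_mem hu.mem hvu)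
  exact hu.eq_of_dyadicCell_eq hU hv (dyadicCell_eq huv (hn ▸ hvu))

lemma mem_cellBoundary (hU : IsCellScale U n) (hu : IsCellCenter U n u) (hv : IsCellCenter U n v)
    (huv : u ∈ dyadicCell (n v) v) (hne : u ≠ v) : u ∈ cellBoundary n v :=
  ⟨huv, fun hvu => hne (hu.eq_of_dyadicCell_eq hU hv (dyadicCell_eq huv hvu))⟩

lemma dist_le (hv : IsCellCenter U n v) (hp : p ∈ dyadicCell (n v) v) (i : ι) :
    dist (p i) (v i) ≤ 2 ^ (-n v) / 2 :=
  dist_le_of_mem_orderCell_dyadicGrid (hv.coord_mem i) (hp i)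

lemma exists_dist_eq (hv : IsCellCenter U n v) (hp : p ∈ cellBoundary n v) :
    ∃ i, dist (p i) (v i) = 2 ^ (-n v) / 2 := by
  obtain ⟨i, hvi, hpi⟩ := exists_mem_dyadicGrid_of_mem_cellBoundary hp
  exact ⟨i, (mem_dyadicGrid_iff_dist_eq (hv.coord_mem i) hvi (hp.1 i)).1 hpi⟩

lemma mem_cellBoundary_of_dist_eq (hv : IsCellCenter U n v) (hp : p ∈ dyadicCell (n v) v) {i : ι}
    (hi : dist (p i) (v i) = 2 ^ (-n v) / 2) : p ∈ cellBoundary n v := by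
  have hne : p i ≠ v i := dist_pos.1 (hi ▸ by positivity)
  have hvi : v i ∉ dyadicGrid (n v) := fun h => hne (eq_of_mem_orderCell h (hp i))
  have hpi := (mem_dyadicGrid_iff_dist_eq (hv.coord_mem i) hvi (hp i)).2 hi
  exact ⟨hp, fun h => hne (eq_of_mem_orderCell hpi (h i)).symm⟩

lemma coeff_le_of_eq (hv : IsCellCenter U n v) (hp : p ∈ cellBoundary n v)
    (hq : q ∈ dyadicCell (n v) v) {a b : ℝ} (ha : 0 ≤ a) (hb : 0 ≤ b)
    (h : a • (p - v) = b • (q - v)) : a ≤ b := by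
  obtain ⟨i, hi⟩ := hv.exists_dist_eq hp
  have hcoord : a * (p i - v i) = b * (q i - v i) := congrArg (· i) h
  refine le_of_mul_le_mul_right ?_ (by positivity : (0 : ℝ) < 2 ^ (-n v) / 2)
  calc a * (2 ^ (-n v) / 2) = |a * (p i - v i)| := by
        rw [← hi, abs_mul, abs_of_nonneg ha, Real.dist_eq]
    _ = b * dist (q i) (v i) := by rw [hcoord, abs_mul, abs_of_nonneg hb, Real.dist_eq]
    _ ≤ b * (2 ^ (-n v) / 2) := mul_le_mul_of_nonneg_left (hv.dist_le hq i) hb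

lemma eq_of_mem_openSegment (hv : IsCellCenter U n v) (hp : p ∈ cellBoundary n v)
    (hq : q ∈ cellBoundary n v) (hxp : x ∈ openSegment ℝ v p) (hxq : x ∈ openSegment ℝ v q) :
    p = q := by
  rw [openSegment_eq_image'] at hxp hxq
  obtain ⟨a, ⟨ha, -⟩, rfl⟩ := hxp
  obtain ⟨b, ⟨hb, -⟩, hab⟩ := hxq
  have h : a • (p - v) = b • (q - v) := (add_left_cancel hab).symm
  obtain rfl : a = b := (hv.coeff_le_of_eq hp hq.1 ha.le hb.le h).antisymm
    (hv.coeff_le_of_eq hq hp.1 hb.le ha.le h.symm)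
  exact sub_left_injective (smul_right_injective _ ha.ne' h)

end IsCellCenter

lemma exists_norm_eq_mem_segment {F : Type*} [NormedAddCommGroup F] [NormedSpace ℝ F]
    [Nontrivial F] {d : F} {r : ℝ} (hd : ‖d‖ ≤ r) : ∃ e : F, ‖e‖ = r ∧ d ∈ segment ℝ 0 e := by
  have hr : 0 ≤ r := (norm_nonneg d).trans hd
  rcases eq_or_ne d 0 with rfl | hd0
  · obtain ⟨e, he⟩ := exists_norm_eq F hr
    exact ⟨e, he, left_mem_segment ℝ 0 e⟩
  · have hpos := norm_pos_iff.2 hd0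
    refine ⟨(r / ‖d‖) • d, ?_, 1 - ‖d‖ / r, ‖d‖ / r, ?_, by positivity, by ring, ?_⟩
    · rw [norm_smul, Real.norm_of_nonneg (by positivity), div_mul_cancel₀ _ hpos.ne']
    · exact sub_nonneg.2 (div_le_one_of_le₀ hd hr)
    · rw [smul_zero, zero_add, smul_smul, div_mul_div_cancel₀ (hpos.trans_le hd).ne',
        div_self hpos.ne', one_smul]

section Fintype

variable [Fintype ι]

namespace IsCellCenter

lemma mem_dyadicCell_iff (hv : IsCellCenter U n v) : p ∈ dyadicCell (n v) v ↔
    (∀ i ∉ freeDirections n v, p i = v i) ∧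
      ∀ i ∈ freeDirections n v, dist (p i) (v i) ≤ 2 ^ (-n v) / 2 := by
  simp only [mem_freeDirections, not_not]
  refine ⟨fun hp => ⟨fun i hi => eq_of_mem_orderCell hi (hp i), fun i _ => hv.dist_le hp i⟩,
    fun ⟨hfix, hfree⟩ i => ?_⟩
  by_cases hi : v i ∈ dyadicGrid (n v)
  · exact hfix i hi ▸ self_mem_orderCell _ _
  · rw [orderCell_dyadicGrid_eq_closedBall (hv.coord_mem i) hi]
    exact hfree i hi

lemma exists_mem_cellBoundary_mem_segment (hv : IsCellCenter U n v)
    (hfree : (freeDirections n v).Nonempty) (hx : x ∈ dyadicCell (n v) v) :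
    ∃ p ∈ cellBoundary n v, x ∈ segment ℝ v p := by
  classical
  have hpos : (0 : ℝ) < 2 ^ (-n v) / 2 := by positivity
  have := hfree.to_subtype
  have hxv : ‖fun i : freeDirections n v => x i - v i‖ ≤ 2 ^ (-n v) / 2 :=
    (pi_norm_le_iff_of_nonneg hpos.le).2 fun i => hv.dist_le hx i
  obtain ⟨e, he, a, b, ha, hb, hab, hxe⟩ := exists_norm_eq_mem_segment hxv
  obtain ⟨i, hi⟩ : ∃ i, ‖e i‖ = 2 ^ (-n v) / 2 := by
    by_contra! hne
    exact he.not_lt ((pi_norm_lt_iff hpos).2 fun i => (he ▸ norm_le_pi_norm e i).lt_of_ne (hne i))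
  let p : EuclideanSpace ℝ ι :=
    WithLp.toLp 2 fun j => if hj : j ∈ freeDirections n v then v j + e ⟨j, hj⟩ else v j
  have hpfix : ∀ j ∉ freeDirections n v, p j = v j := fun j hj => dif_neg hj
  have hpfree : ∀ j : freeDirections n v, p j = v j + e j := fun j => dif_pos j.2
  have hp : p ∈ dyadicCell (n v) v := hv.mem_dyadicCell_iff.2 ⟨hpfix, fun j hj => by
    rw [hpfree ⟨j, hj⟩, dist_self_add_left, ← he]
    exact norm_le_pi_norm e _⟩
  refine ⟨p, hv.mem_cellBoundary_of_dist_eq hp (i := i) ?_, a, b, ha, hb, hab, ?_⟩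
  · rw [hpfree, dist_self_add_left, hi]
  · ext j
    obtain rfl : a = 1 - b := eq_sub_of_add_eq hab
    by_cases hj : j ∈ freeDirections n v
    · have hxj : b * e ⟨j, hj⟩ = x j - v j := by simpa using congrFun hxe ⟨j, hj⟩
      simp only [PiLp.add_apply, PiLp.smul_apply, hpfree ⟨j, hj⟩, smul_eq_mul]
      linarith
    · simp only [PiLp.add_apply, PiLp.smul_apply, hpfix j hj, smul_eq_mul,
        (hv.mem_dyadicCell_iff.1 hx).1 j hj]
      ring

end IsCellCenter

namespace IsCellScale

lemma exists_center_freeDirections (hU : IsCellScale U n) (hx : x ∈ U) :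
    ∃ v, IsCellCenter U n v ∧ n v = n x ∧ dyadicCell (n x) v = dyadicCell (n x) x ∧
      freeDirections n v = freeDirections n x := by
  obtain ⟨v, hv, hn, hcell⟩ := hU.exists_isCellCenter hx
  refine ⟨v, hv, hn, hcell, ?_⟩
  ext i
  have hi := orderCell_eq_of_dyadicCell_eq hcell i
  rw [mem_freeDirections, mem_freeDirections, hn]
  exact not_congr ⟨mem_of_orderCell_eq hi, mem_of_orderCell_eq hi.symm⟩

lemma exists_center_card_freeDirections (hU : IsCellScale U n) (hx : x ∈ U) :
    ∃ v, IsCellCenter U n v ∧ x ∈ dyadicCell (n v) v ∧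
      (freeDirections n v).card = Fintype.card ι := by
  choose r hr hxr using fun i => exists_notMem_dyadicGrid_mem_orderCell (n x) (x i)
  set y : EuclideanSpace ℝ ι := WithLp.toLp 2 r
  have hxy : x ∈ dyadicCell (n x) y := hxr
  have hyx := hU.le_of_mem_coface hx hxy
  obtain ⟨v, hv, hn, hcell, hfree⟩ := hU.exists_center_freeDirections (hU.mem_of_mem_coface hx hxy)
  refine ⟨v, hv, ?_, ?_⟩
  · rw [hn, hcell]
    exact dyadicCell_anti hyx y hxy
  · rw [hfree, ← Finset.card_univ]
    congr
    exact Finset.eq_univ_of_forall fun i =>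
      mem_freeDirections.2 fun hi => hr i (dyadicGrid_mono hyx hi)

lemma exists_facet_center (hU : IsCellScale U n) (hv : v ∈ U) (hp : p ∈ cellBoundary n v) :
    ∃ u, IsCellCenter U n u ∧ u ∈ dyadicCell (n v) v ∧ p ∈ dyadicCell (n u) u ∧
      (freeDirections n u).card + 1 = (freeDirections n v).card := by
  classical
  obtain ⟨i, hvi, hpi⟩ := exists_mem_dyadicGrid_of_mem_cellBoundary hp
  have hvp := hU.le_of_mem hv hp.1
  obtain ⟨q, hqv, hpq, hq, hq'⟩ := exists_mem_dyadicCell_coord hvp hp.1 hpi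
  have hqp := hU.le_of_mem_coface (hU.mem_of_mem hv hp.1) hpq
  have hvq := hU.le_of_mem hv hqv
  obtain ⟨u, hu, hn, hcell, hfree⟩ := hU.exists_center_freeDirections (hU.mem_of_mem hv hqv)
  have hfree' : freeDirections n q = (freeDirections n v).erase i := by
    ext j
    rw [Finset.mem_erase, mem_freeDirections, mem_freeDirections]
    refine ⟨fun hj => ?_, fun ⟨hji, hvj⟩ hj => hq' j hji hvj (dyadicGrid_mono hqp hj)⟩
    exact not_or.1 fun h => hj (dyadicGrid_mono hvq (hq j h))
  refine ⟨u, hu, ?_, ?_, ?_⟩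
  · exact hU.cell_subset_cell hv hqv (hcell ▸ self_mem_dyadicCell _ u)
  · rw [hn, hcell]
    exact dyadicCell_anti hqp q hpq
  · rw [hfree, hfree', Finset.card_erase_add_one (mem_freeDirections.2 hvi)]

end IsCellScale

end Fintype

end CellScale

section ConvexHull

variable {E : Type*} [AddCommGroup E] [Module ℝ E]

lemma mem_convexHull_erase_or_mem_openSegment [DecidableEq E] {s : Finset E} {v x : E} (hv : v ∈ s)
    (hx : x ∈ convexHull ℝ (s : Set E)) :
    x ∈ convexHull ℝ (s.erase v : Set E) ∨ x = v ∨
      ∃ p ∈ convexHull ℝ (s.erase v : Set E), x ∈ openSegment ℝ v p := by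
  rw [← Finset.insert_erase hv, Finset.coe_insert] at hx
  rcases (s.erase v : Set E).eq_empty_or_nonempty with he | hne
  · rw [he, LawfulSingleton.insert_empty_eq, convexHull_singleton, mem_singleton_iff] at hx
    exact .inr (.inl hx)
  · rw [convexHull_insert hne, mem_convexJoin] at hx
    obtain ⟨_, rfl, p, hp, hxp⟩ := hx
    rw [← insert_endpoints_openSegment] at hxp
    rcases hxp with rfl | rfl | hxp
    exacts [.inr (.inl rfl), .inl hp, .inr (.inr ⟨p, hp, hxp⟩)]

lemma affineIndependent_of_disjoint_convexHull {s : Set E}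
    (h : ∀ t ⊆ s, Disjoint (convexHull ℝ t) (convexHull ℝ (s \ t))) :
    AffineIndependent ℝ ((↑) : s → E) := by
  by_contra hdep
  obtain ⟨I, x, hxI, hxI'⟩ := Convex.radon_partition hdep
  rw [image_compl_eq_range_sdiff_image Subtype.val_injective, Subtype.range_coe] at hxI'
  exact disjoint_left.1 (h _ (Subtype.coe_image_subset s I)) hxI hxI'

end ConvexHull

section CellFlag

variable {ι : Type*} {U : Set (EuclideanSpace ℝ ι)} {n : EuclideanSpace ℝ ι → ℤ}
  {s t : Finset (EuclideanSpace ℝ ι)} {v w x : EuclideanSpace ℝ ι}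

/-- A flag of cells, recorded by the barycentres of its members; flags are the simplices of the
barycentric subdivision of the cell complex. -/
structure IsCellFlag (U : Set (EuclideanSpace ℝ ι)) (n : EuclideanSpace ℝ ι → ℤ)
    (s : Finset (EuclideanSpace ℝ ι)) : Prop where
  isCellCenter : ∀ v ∈ s, IsCellCenter U n v
  isChain : IsChain (fun u v => u ∈ dyadicCell (n v) v) (s : Set (EuclideanSpace ℝ ι))

/-- `v` is the largest member of the flag `s`. -/
def IsFlagTop (n : EuclideanSpace ℝ ι → ℤ) (s : Finset (EuclideanSpace ℝ ι))
    (v : EuclideanSpace ℝ ι) : Prop :=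
  v ∈ s ∧ (s : Set (EuclideanSpace ℝ ι)) ⊆ dyadicCell (n v) v

lemma IsFlagTop.convexHull_subset (hv : IsFlagTop n s v) :
    convexHull ℝ (s : Set (EuclideanSpace ℝ ι)) ⊆ dyadicCell (n v) v :=
  convexHull_min hv.2 (convex_dyadicCell _ v)

namespace IsCellFlag

lemma mono (ht : IsCellFlag U n t) (hst : s ⊆ t) : IsCellFlag U n s :=
  ⟨fun v hv => ht.isCellCenter v (hst hv), ht.isChain.mono (Finset.coe_subset.2 hst)⟩

lemma exists_isFlagTop (hU : IsCellScale U n) (hs : IsCellFlag U n s) (hne : s.Nonempty) :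
    ∃ v, IsFlagTop n s v := by
  classical
  induction hne using Finset.Nonempty.cons_induction with
  | singleton v =>
    exact ⟨v, Finset.mem_singleton_self v, by
      simpa only [Finset.coe_singleton, singleton_subset_iff] using self_mem_dyadicCell _ v⟩
  | cons v s hv _ ih =>
    obtain ⟨w, hw, hsw⟩ := ih (hs.mono (Finset.subset_cons hv))
    have hvs := Finset.mem_cons_self (h := hv) v s
    have hws := Finset.mem_cons_of_mem (hb := hv) hw
    rcases hs.isChain hvs hws (ne_of_mem_of_not_mem hw hv).symm with hvw | hwv
    · exact ⟨w, hws, by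
        rw [Finset.coe_cons]
        exact insert_subset hvw hsw⟩
    · refine ⟨v, hvs, ?_⟩
      rw [Finset.coe_cons]
      exact insert_subset (self_mem_dyadicCell _ v)
        (hsw.trans (hU.cell_subset_cell (hs.isCellCenter v hvs).mem hwv))

lemma convexHull_subset (hU : IsCellScale U n) (hs : IsCellFlag U n s) :
    convexHull ℝ (s : Set (EuclideanSpace ℝ ι)) ⊆ U := by
  rcases s.eq_empty_or_nonempty with rfl | hne
  · simp only [Finset.coe_empty, convexHull_empty, empty_subset]
  · obtain ⟨v, hv⟩ := hs.exists_isFlagTop hU hne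
    exact hv.convexHull_subset.trans fun x => hU.mem_of_mem (hs.isCellCenter v hv.1).mem

lemma convexHull_erase_subset [DecidableEq (EuclideanSpace ℝ ι)] (hU : IsCellScale U n)
    (hs : IsCellFlag U n s) (hv : IsFlagTop n s v) :
    convexHull ℝ (s.erase v : Set (EuclideanSpace ℝ ι)) ⊆ cellBoundary n v := by
  intro p hp
  have hne : (s.erase v).Nonempty := by
    simpa only [Finset.coe_nonempty] using convexHull_nonempty_iff.1 ⟨p, hp⟩
  have hvc := hs.isCellCenter v hv.1
  obtain ⟨w, hw⟩ := (hs.mono (s.erase_subset v)).exists_isFlagTop hU hne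
  have hws := Finset.mem_of_mem_erase hw.1
  have hwv : w ∈ cellBoundary n v := (hs.isCellCenter w hws).mem_cellBoundary hU hvc (hv.2 hws)
    (Finset.ne_of_mem_erase hw.1)
  have hpw := hw.convexHull_subset hp
  have hnvw := hU.le_of_mem hvc.mem hwv.1
  exact ⟨hU.cell_subset_cell hvc.mem hwv.1 hpw, fun h =>
    hwv.2 (dyadicCell_subset_dyadicCell (dyadicCell_anti hnvw w hpw) h)⟩

lemma dyadicCell_eq_of_notMem_erase [DecidableEq (EuclideanSpace ℝ ι)] (hv : IsFlagTop n s v)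
    (hx : x ∈ convexHull ℝ (s : Set (EuclideanSpace ℝ ι)))
    (hxv : x ∉ convexHull ℝ (s.erase v : Set (EuclideanSpace ℝ ι))) :
    dyadicCell (n v) x = dyadicCell (n v) v := by
  rcases mem_convexHull_erase_or_mem_openSegment hv.1 hx with h | rfl | ⟨p, hp, hxp⟩
  · exact absurd h hxv
  · rfl
  · have hps : p ∈ convexHull ℝ (s : Set (EuclideanSpace ℝ ι)) :=
      convexHull_mono (Finset.coe_subset.2 (s.erase_subset v)) hp
    exact dyadicCell_eq_of_mem_openSegment (hv.convexHull_subset hps) hxp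

lemma top_eq_of_notMem_erase [DecidableEq (EuclideanSpace ℝ ι)] (hU : IsCellScale U n)
    (hs : IsCellFlag U n s) (ht : IsCellFlag U n t) (hv : IsFlagTop n s v) (hw : IsFlagTop n t w)
    (hxs : x ∈ convexHull ℝ (s : Set (EuclideanSpace ℝ ι)))
    (hxt : x ∈ convexHull ℝ (t : Set (EuclideanSpace ℝ ι)))
    (hxv : x ∉ convexHull ℝ (s.erase v : Set (EuclideanSpace ℝ ι)))
    (hxw : x ∉ convexHull ℝ (t.erase w : Set (EuclideanSpace ℝ ι))) : v = w := by
  have hvc := hs.isCellCenter v hv.1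
  have hwc := ht.isCellCenter w hw.1
  have hxv' := dyadicCell_eq_of_notMem_erase hv hxs hxv
  have hxw' := dyadicCell_eq_of_notMem_erase hw hxt hxw
  have hn : n v = n w :=
    (hU.eq_of_dyadicCell_eq hvc.mem hxv').symm.trans (hU.eq_of_dyadicCell_eq hwc.mem hxw')
  exact hvc.eq_of_dyadicCell_eq hU hwc (by rw [← hxw', ← hn, hxv'])

/- Induction on the two flags. If `x` misses the facet opposite the top vertex in both simplices,
the tops agree, and both simplices are cones over the boundary of the same cell; the radius through
`x` leaves the cell at a point common to both bases. -/
lemma mem_convexHull_inter [DecidableEq (EuclideanSpace ℝ ι)] (hU : IsCellScale U n)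
    (hs : IsCellFlag U n s) (ht : IsCellFlag U n t)
    (hxs : x ∈ convexHull ℝ (s : Set (EuclideanSpace ℝ ι)))
    (hxt : x ∈ convexHull ℝ (t : Set (EuclideanSpace ℝ ι))) :
    x ∈ convexHull ℝ ((s ∩ t : Finset (EuclideanSpace ℝ ι)) : Set (EuclideanSpace ℝ ι)) := by
  induction hN : s.card + t.card using Nat.strong_induction_on generalizing s t x with
  | _ N ih =>
  have hsne : s.Nonempty := Finset.coe_nonempty.1 (convexHull_nonempty_iff.1 ⟨x, hxs⟩)
  have htne : t.Nonempty := Finset.coe_nonempty.1 (convexHull_nonempty_iff.1 ⟨x, hxt⟩)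
  obtain ⟨v, hv⟩ := hs.exists_isFlagTop hU hsne
  obtain ⟨w, hw⟩ := ht.exists_isFlagTop hU htne
  have hsv := Finset.card_erase_lt_of_mem hv.1
  have htw := Finset.card_erase_lt_of_mem hw.1
  have hs' := hs.mono (s.erase_subset v)
  have ht' := ht.mono (t.erase_subset w)
  by_cases hxv : x ∈ convexHull ℝ (s.erase v : Set (EuclideanSpace ℝ ι))
  · exact convexHull_mono (Finset.coe_subset.2 (Finset.inter_subset_inter_right (s.erase_subset v)))
      (ih _ (by lia) hs' ht hxv hxt rfl)
  by_cases hxw : x ∈ convexHull ℝ (t.erase w : Set (EuclideanSpace ℝ ι))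
  · exact convexHull_mono (Finset.coe_subset.2 (Finset.inter_subset_inter_left (t.erase_subset w)))
      (ih _ (by lia) hs ht' hxs hxw rfl)
  obtain rfl := top_eq_of_notMem_erase hU hs ht hv hw hxs hxt hxv hxw
  have hvst := subset_convexHull ℝ _ (Finset.mem_coe.2 (Finset.mem_inter.2 ⟨hv.1, hw.1⟩))
  rcases mem_convexHull_erase_or_mem_openSegment hv.1 hxs with h | rfl | ⟨p, hp, hxp⟩
  · exact absurd h hxv
  · exact hvst
  rcases mem_convexHull_erase_or_mem_openSegment hw.1 hxt with h | rfl | ⟨q, hq, hxq⟩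
  · exact absurd h hxw
  · exact hvst
  obtain rfl := (hs.isCellCenter v hv.1).eq_of_mem_openSegment (hs.convexHull_erase_subset hU hv hp)
    (ht.convexHull_erase_subset hU hw hq) hxp hxq
  refine (convex_convexHull ℝ _).openSegment_subset hvst ?_ hxp
  exact convexHull_mono (Finset.coe_subset.2
    (Finset.inter_subset_inter (s.erase_subset v) (t.erase_subset v)))
    (ih _ (by lia) hs' ht' hp hq rfl)

lemma affineIndependent (hU : IsCellScale U n) (hs : IsCellFlag U n s) :
    AffineIndependent ℝ ((↑) : s → EuclideanSpace ℝ ι) := by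
  classical
  refine affineIndependent_of_disjoint_convexHull (s := (s : Set (EuclideanSpace ℝ ι)))
    fun t hts => disjoint_left.2 fun x hxt hxt' => ?_
  lift t to Finset (EuclideanSpace ℝ ι) using s.finite_toSet.subset hts
  rw [← Finset.coe_sdiff] at hxt'
  have hx := (hs.mono (Finset.coe_subset.1 hts)).mem_convexHull_inter hU
    (hs.mono Finset.sdiff_subset) hxt hxt'
  rw [Finset.inter_sdiff_self, Finset.coe_empty, convexHull_empty] at hx
  exact hx

lemma insert_top [DecidableEq (EuclideanSpace ℝ ι)]
    (hv : IsCellCenter U n v) (hs : IsCellFlag U n s)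
    (hsv : (s : Set (EuclideanSpace ℝ ι)) ⊆ dyadicCell (n v) v) : IsCellFlag U n (insert v s) := by
  refine ⟨fun u hu => ?_, ?_⟩
  · rcases Finset.mem_insert.1 hu with rfl | hu
    exacts [hv, hs.isCellCenter u hu]
  · rw [Finset.coe_insert]
    exact hs.isChain.insert fun u hu _ => .inr (hsv hu)

end IsCellFlag

variable [Fintype ι]

lemma IsCellScale.exists_isCellFlag_mem_convexHull (hU : IsCellScale U n) (hv : IsCellCenter U n v)
    (hx : x ∈ dyadicCell (n v) v) :
    ∃ s, IsCellFlag U n s ∧ s.card = (freeDirections n v).card + 1 ∧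
      (s : Set (EuclideanSpace ℝ ι)) ⊆ dyadicCell (n v) v ∧
        x ∈ convexHull ℝ (s : Set (EuclideanSpace ℝ ι)) := by
  classical
  induction hN : (freeDirections n v).card generalizing v x with
  | zero =>
    obtain rfl : x = v := by
      ext i
      refine (hv.mem_dyadicCell_iff.1 hx).1 i ?_
      rw [Finset.card_eq_zero.1 hN]
      exact Finset.notMem_empty i
    refine ⟨{x}, ⟨?_, ?_⟩, Finset.card_singleton x, ?_, ?_⟩ <;> simp [hv, hx]
  | succ N ih =>
    obtain ⟨p, hp, hxp⟩ :=
      hv.exists_mem_cellBoundary_mem_segment (Finset.card_pos.1 (by lia)) hx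
    obtain ⟨u, hu, huv, hpu, hcard⟩ := hU.exists_facet_center hv.mem hp
    obtain ⟨s, hs, hscard, hsu, hps⟩ := ih hu hpu (by lia)
    have hsv := hsu.trans (hU.cell_subset_cell hv.mem huv)
    have hvs : v ∉ s := fun hvs => by
      have := hu.eq_of_mem_of_mem hU hv huv (hsu hvs)
      lia
    refine ⟨insert v s, hs.insert_top hv hsv, ?_, ?_, ?_⟩
    · rw [Finset.card_insert_of_notMem hvs, hscard]
    · rw [Finset.coe_insert]
      exact insert_subset (self_mem_dyadicCell _ v) hsv
    · rw [Finset.coe_insert]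
      exact (convex_convexHull ℝ _).segment_subset (subset_convexHull ℝ _ (mem_insert _ _))
        (convexHull_mono (subset_insert _ _) hps) hxp

/-- The barycentric subdivision of the cell complex of a scale function: its top-dimensional
simplices are the complete flags. -/
def flagComplex (hU : IsCellScale U n) : Geometry.SimplicialComplex ℝ (EuclideanSpace ℝ ι) where
  faces := {s | s.Nonempty ∧ ∃ t, s ⊆ t ∧ IsCellFlag U n t ∧ t.card = Fintype.card ι + 1}
  isRelLowerSet_faces := fun _ ⟨hne, t, hst, ht⟩ =>
    ⟨hne, fun _ hrs hrne => ⟨hrne, t, Finset.Subset.trans hrs hst, ht⟩⟩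
  indep := fun ⟨_, _, hst, ht, _⟩ => (ht.mono hst).affineIndependent hU
  inter_subset_convexHull := by
    classical
    rintro s t ⟨_, s', hs, hs', _⟩ ⟨_, t', ht, ht', _⟩ x ⟨hxs, hxt⟩
    simpa only [Finset.coe_inter] using
      (hs'.mono hs).mem_convexHull_inter hU (ht'.mono ht) hxs hxt

variable {hU : IsCellScale U n}

lemma isCellFlag_of_mem_flagComplex (hs : s ∈ (flagComplex hU).faces) : IsCellFlag U n s :=
  let ⟨_, _, hst, ht, _⟩ := hs
  ht.mono hst

lemma card_le_of_mem_flagComplex (hs : s ∈ (flagComplex hU).faces) : s.card ≤ Fintype.card ι + 1 :=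
  let ⟨_, _, hst, _, hcard⟩ := hs
  hcard ▸ Finset.card_le_card hst

lemma exists_mem_flagComplex_mem_convexHull (hx : x ∈ U) :
    ∃ s ∈ (flagComplex hU).faces, s.card = Fintype.card ι + 1 ∧
      x ∈ convexHull ℝ (s : Set (EuclideanSpace ℝ ι)) := by
  obtain ⟨v, hv, hxv, hcard⟩ := hU.exists_center_card_freeDirections hx
  obtain ⟨s, hs, hscard, -, hxs⟩ := hU.exists_isCellFlag_mem_convexHull hv hxv
  rw [hcard] at hscard
  exact ⟨s, ⟨Finset.card_pos.1 (by lia), s, subset_rfl, hs, hscard⟩, hscard, hxs⟩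

end CellFlag

section Heights

variable {E : Type*} [NormedAddCommGroup E] [NormedSpace ℝ E] {s t : Set E} {b p x : E}
  {S : AffineSubspace ℝ E} {r η : ℝ}

/-- All heights of the simplex with vertex set `s` are at least `η`. -/
def HasHeightsGE (η : ℝ) (s : Set E) : Prop :=
  ∀ b ∈ s, η ≤ infDist b (affineSpan ℝ (s \ {b}))

lemma HasHeightsGE.mono (hs : HasHeightsGE η s) (hts : t ⊆ s) (ht : t.Nontrivial) :
    HasHeightsGE η t := by
  intro b hb
  obtain ⟨c, hc, hcb⟩ := ht.exists_ne b
  exact (hs b (hts hb)).trans (infDist_le_infDist_of_subset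
    (affineSpan_mono ℝ (sdiff_subset_sdiff_left hts))
    ((affineSpan_nonempty ℝ).2 ⟨c, hc, hcb⟩))

lemma injective_of_dist_eq_mul {X Y : Type*} [MetricSpace X] [PseudoMetricSpace Y] {f : X → Y}
    (hr : r ≠ 0) (hf : ∀ x y, dist (f x) (f y) = r * dist x y) : Function.Injective f := by
  intro x y hxy
  have := hf x y
  rwa [hxy, dist_self, zero_eq_mul, or_iff_right hr, dist_eq_zero] at this

lemma HasHeightsGE.of_image (hr : 0 < r) (f : E →ᵃ[ℝ] E)
    (hf : ∀ x y, dist (f x) (f y) = r * dist x y) (hs : s.Nontrivial)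
    (h : HasHeightsGE η (f '' s)) : HasHeightsGE (η / r) s := by
  have hinj := injective_of_dist_eq_mul hr.ne' hf
  intro b hb
  have hne : (s \ {b}).Nonempty := hs.exists_ne b
  refine (le_infDist ((affineSpan_nonempty ℝ).2 hne)).2 fun {y} hy => ?_
  rw [div_le_iff₀' hr, ← hf]
  refine (h (f b) (mem_image_of_mem f hb)).trans (infDist_le_dist_of_mem ?_)
  rw [← image_singleton, ← image_sdiff hinj, ← AffineSubspace.map_span]
  exact mem_image_of_mem f hy

lemma exists_pos_forall_hasHeightsGE_of_finite {G : Set E} (hG : G.Finite) :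
    ∃ c > 0, ∀ s ⊆ G, s.Nontrivial → AffineIndependent ℝ ((↑) : s → E) → HasHeightsGE c s := by
  have hev : ∀ s ∈ 𝒫 G, ∀ᶠ c in nhdsWithin (0 : ℝ) (Ioi 0),
      s.Nontrivial → AffineIndependent ℝ ((↑) : s → E) → HasHeightsGE c s := by
    intro s hsG
    by_cases hs : s.Nontrivial ∧ AffineIndependent ℝ ((↑) : s → E)
    swap
    · exact .of_forall fun _ hs₁ hs₂ => (hs ⟨hs₁, hs₂⟩).elim
    refine Filter.Eventually.mono ?_ fun _ hc _ _ => hc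
    have hfin := hG.subset hsG
    refine (Filter.eventually_all_finite hfin).2 fun b hb => ?_
    have := finiteDimensional_direction_affineSpan_of_finite ℝ (hfin.sdiff (t := {b}))
    have hbs : b ∉ affineSpan ℝ (s \ {b}) := by
      have := hs.2.notMem_affineSpan_sdiff ⟨b, hb⟩ univ
      rwa [← compl_eq_univ_sdiff, image_compl_eq_range_sdiff_image Subtype.val_injective,
        Subtype.range_coe, image_singleton] at this
    have hne : (s \ {b}).Nonempty := hs.1.exists_ne b
    have hpos : 0 < infDist b (affineSpan ℝ (s \ {b})) :=
      ((AffineSubspace.closed_of_finiteDimensional _).notMem_iff_infDist_pos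
        ((affineSpan_nonempty ℝ).2 hne)).1 hbs
    exact nhdsWithin_le_nhds (Iic_mem_nhds hpos)
  obtain ⟨c, hc, hcpos⟩ :=
    (((Filter.eventually_all_finite hG.powerset).2 hev).and self_mem_nhdsWithin).exists
  exact ⟨c, hcpos, hc⟩

lemma mul_infDist_le_infDist_homothety (hp : p ∈ S) {a : ℝ} (ha : 0 ≤ a) (b : E) :
    a * infDist b S ≤ infDist (AffineMap.homothety p a b) S := by
  rcases ha.eq_or_lt with rfl | ha
  · rw [zero_mul]
    exact infDist_nonneg
  refine (le_infDist ⟨p, hp⟩).2 fun {y} hy => ?_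
  have hmem : AffineMap.homothety p a⁻¹ y ∈ S := AffineMap.lineMap_mem _ hp hy
  calc a * infDist b S ≤ a * dist b (AffineMap.homothety p a⁻¹ y) := by
        gcongr
        exact infDist_le_dist_of_mem hmem
    _ = dist (AffineMap.homothety p a b) y := by
        simp only [AffineMap.homothety_apply, vsub_eq_sub, vadd_eq_add]
        rw [← Real.norm_of_nonneg ha.le, ← dist_smul₀, Real.norm_of_nonneg ha.le, smul_add,
          smul_inv_smul₀ ha.ne', ← dist_sub_right _ _ (a • p), ← dist_sub_right _ y p]
        congr 1 <;> module

lemma dist_mul_infDist_le (hp : p ∈ S) (hx : x ∈ segment ℝ b p) :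
    dist x p * infDist b S ≤ dist b p * infDist x S := by
  rw [segment_symm, segment_eq_image_lineMap] at hx
  obtain ⟨a, ⟨ha, -⟩, rfl⟩ := hx
  rw [dist_lineMap_left, Real.norm_of_nonneg ha, mul_right_comm, mul_comm, dist_comm p b]
  gcongr
  exact mul_infDist_le_infDist_homothety hp ha b

lemma card_smul_centroid {ω : Finset E} (hω : ω.Nonempty) :
    (ω.card : ℝ) • ω.centroid ℝ id = ∑ x ∈ ω, x := by
  have hcard : (ω.card : ℝ) ≠ 0 := Nat.cast_ne_zero.2 hω.card_ne_zero
  simp only [ω.centroid_eq_centerMass hω, Finset.centerMass, Finset.centroidWeights_apply,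
    Finset.sum_const, nsmul_eq_mul, mul_inv_cancel₀ hcard, inv_one, one_smul, id]
  rw [← Finset.smul_sum, smul_inv_smul₀ hcard]

lemma centroid_eq_homothety [DecidableEq E] {ω : Finset E} (hω : ω.Nontrivial) (hb : b ∈ ω) :
    ω.centroid ℝ id =
      AffineMap.homothety ((ω.erase b).centroid ℝ id) ((ω.card : ℝ)⁻¹) b := by
  have hcard : (ω.card : ℝ) = (ω.erase b).card + 1 := by
    exact_mod_cast (Finset.card_erase_add_one hb).symm
  have hpos : (ω.card : ℝ) ≠ 0 := Nat.cast_ne_zero.2 hω.nonempty.card_ne_zero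
  refine smul_right_injective E hpos ?_
  simp only [AffineMap.homothety_apply, vsub_eq_sub, vadd_eq_add]
  rw [card_smul_centroid hω.nonempty, smul_add, smul_inv_smul₀ hpos, hcard, add_smul, one_smul,
    card_smul_centroid hω.erase_nonempty, ← Finset.add_sum_erase ω _ hb]
  abel

lemma HasHeightsGE.div_card_le_infDist_centroid [DecidableEq E] {ω : Finset E}
    (h : HasHeightsGE η (ω : Set E)) (hω : ω.Nontrivial) (hb : b ∈ ω) :
    η / ω.card ≤ infDist (ω.centroid ℝ id) (affineSpan ℝ (ω.erase b : Set E)) := by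
  have hmem : (ω.erase b).centroid ℝ id ∈ affineSpan ℝ (ω.erase b : Set E) :=
    convexHull_subset_affineSpan _ (Finset.centroid_mem_convexHull _ hω.erase_nonempty)
  rw [centroid_eq_homothety hω hb, div_eq_inv_mul]
  refine (mul_le_mul_of_nonneg_left ?_ (by positivity)).trans
    (mul_infDist_le_infDist_homothety hmem (by positivity) b)
  rw [Finset.coe_erase]
  exact h b hb

lemma dist_le_diam_convexHull {ω : Finset E} {x y : E} (hx : x ∈ convexHull ℝ (ω : Set E))
    (hy : y ∈ convexHull ℝ (ω : Set E)) : dist x y ≤ diam (convexHull ℝ (ω : Set E)) :=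
  dist_le_diam_of_mem (isBounded_convexHull.2 ω.finite_toSet.isBounded) hx hy

lemma infDist_centroid_le_diam {ω t : Finset E} (ht : t.Nonempty) (htω : t ⊆ ω) :
    infDist (ω.centroid ℝ id) (affineSpan ℝ (t : Set E)) ≤ diam (convexHull ℝ (ω : Set E)) := by
  obtain ⟨q, hq⟩ := ht
  exact (infDist_le_dist_of_mem (subset_affineSpan ℝ _ hq)).trans
    (dist_le_diam_convexHull (Finset.centroid_mem_convexHull _ ⟨q, htω hq⟩)
      (subset_convexHull ℝ _ (htω hq)))

lemma HasHeightsGE.dist_le_of_mem_segment [DecidableEq E] {ω : Finset E} {y : E}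
    (hω : HasHeightsGE η (ω : Set E)) (hη : 0 < η) (hb : b ∈ ω)
    (hp : p ∈ convexHull ℝ (ω.erase b : Set E)) (hx : x ∈ segment ℝ b p)
    (hy : y ∈ convexHull ℝ (ω.erase b : Set E)) :
    dist x p ≤ diam (convexHull ℝ (ω : Set E)) / η * dist x y := by
  have hbp : dist b p ≤ diam (convexHull ℝ (ω : Set E)) :=
    dist_le_diam_convexHull (subset_convexHull ℝ _ hb)
      (convexHull_mono (Finset.coe_subset.2 (ω.erase_subset b)) hp)
  rw [Finset.coe_erase] at hp hy
  have hspan := convexHull_subset_affineSpan (𝕜 := ℝ) (ω \ {b} : Set E)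
  rw [div_mul_eq_mul_div, le_div_iff₀ hη]
  calc dist x p * η ≤ dist x p * infDist b (affineSpan ℝ (ω \ {b} : Set E)) := by
        gcongr
        exact hω b hb
    _ ≤ dist b p * infDist x (affineSpan ℝ (ω \ {b} : Set E)) :=
        dist_mul_infDist_le (hspan hp) hx
    _ ≤ diam (convexHull ℝ (ω : Set E)) * dist x y := by
        gcongr
        · exact infDist_nonneg
        · exact infDist_le_dist_of_mem (hspan hy)

/- If `x` lies on the segment from the vertex `b` to a point `p` of the ridge `ω₁ ∩ ω₂`, then
`v = p` works, because `x` moves away from `ω₂` at a definite rate as it moves from `p` to `b`. -/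
lemma HasHeightsGE.exists_mem_inter_dist_add_dist_le [DecidableEq E] {ω : Finset E} {a y : E}
    (hω : HasHeightsGE η (ω : Set E)) (hη : 0 < η) (hcard : 3 ≤ ω.card) (ha : a ∈ ω) (hb : b ∈ ω)
    (hx : x ∈ convexHull ℝ (ω.erase a : Set E)) (hy : y ∈ convexHull ℝ (ω.erase b : Set E)) :
    ∃ v ∈ convexHull ℝ (ω.erase a : Set E) ∩ convexHull ℝ (ω.erase b : Set E),
      dist x v + dist v y ≤ (1 + 2 * (diam (convexHull ℝ (ω : Set E)) / η)) * dist x y := by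
  suffices ∃ v ∈ convexHull ℝ (ω.erase a : Set E) ∩ convexHull ℝ (ω.erase b : Set E),
      dist x v ≤ diam (convexHull ℝ (ω : Set E)) / η * dist x y by
    obtain ⟨v, hv, hxv⟩ := this
    exact ⟨v, hv, by linarith [dist_triangle_left v y x]⟩
  by_cases hxb : x ∈ convexHull ℝ (ω.erase b : Set E)
  · refine ⟨x, ⟨hx, hxb⟩, ?_⟩
    rw [dist_self]
    exact mul_nonneg (div_nonneg diam_nonneg hη.le) dist_nonneg
  have hab : b ∈ ω.erase a := Finset.mem_erase.2 ⟨by rintro rfl; exact hxb hx, hb⟩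
  have hsub : convexHull ℝ ((ω.erase a).erase b : Set E) ⊆ convexHull ℝ (ω.erase b : Set E) :=
    convexHull_mono (Finset.coe_subset.2 (Finset.erase_subset_erase b (ω.erase_subset a)))
  obtain ⟨p, hp, hxp⟩ : ∃ p ∈ convexHull ℝ ((ω.erase a).erase b : Set E), x ∈ segment ℝ b p := by
    rcases mem_convexHull_erase_or_mem_openSegment hab hx with h | rfl | ⟨p, hp, h⟩
    · exact (hxb (hsub h)).elim
    · obtain ⟨p, hp⟩ : ((ω.erase a).erase x).Nonempty := Finset.card_pos.1 (by
        rw [Finset.card_erase_of_mem hab, Finset.card_erase_of_mem ha]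
        lia)
      exact ⟨p, subset_convexHull ℝ _ hp, left_mem_segment ℝ x p⟩
    · exact ⟨p, hp, openSegment_subset_segment ℝ _ _ h⟩
  exact ⟨p, ⟨convexHull_mono (Finset.coe_subset.2 (Finset.erase_subset b _)) hp, hsub hp⟩,
    hω.dist_le_of_mem_segment hη hb (hsub hp) hxp hy⟩

lemma exists_mem_eq_erase {α : Type*} [DecidableEq α] {s t : Finset α} (hts : t ⊆ s)
    (hcard : t.card + 1 = s.card) : ∃ a ∈ s, t = s.erase a := by
  obtain ⟨a, ha, rfl⟩ := Finset.exists_eq_insert_iff.2 ⟨hts, hcard⟩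
  exact ⟨a, Finset.mem_insert_self a t, (Finset.erase_insert ha).symm⟩

end Heights

section Beta

variable {m : ℕ} {σ ω : Finset (Euc m)} {η : ℝ}

lemma le_csInf_image_le_csSup_image_le {ι α : Type*} [ConditionallyCompleteLattice α] {P : Set ι}
    {f g : ι → α} {a b : α} (hP : P.Nonempty)
    (h : ∀ i ∈ P, a ≤ f i ∧ f i ≤ g i ∧ g i ≤ b) :
    a ≤ sInf (f '' P) ∧ sInf (f '' P) ≤ sSup (g '' P) ∧ sSup (g '' P) ≤ b := by
  have hf : BddBelow (f '' P) := ⟨a, forall_mem_image.2 fun i hi => (h i hi).1⟩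
  have hg : BddAbove (g '' P) := ⟨b, forall_mem_image.2 fun i hi => (h i hi).2.2⟩
  obtain ⟨i, hi⟩ := hP
  exact ⟨le_csInf ⟨_, i, hi, rfl⟩ (forall_mem_image.2 fun i hi => (h i hi).1),
    (csInf_le hf ⟨i, hi, rfl⟩).trans ((h i hi).2.1.trans (le_csSup hg ⟨i, hi, rfl⟩)),
    csSup_le ⟨_, i, hi, rfl⟩ (forall_mem_image.2 fun i hi => (h i hi).2.2)⟩

lemma setOf_exists_subset_eq_image {α β : Type*} (ω : Finset α) (p : Finset α → Prop)
    (f : Finset α → β) : {d | ∃ t ⊆ ω, p t ∧ d = f t} = f '' {t | t ⊆ ω ∧ p t} := by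
  ext d
  simp only [mem_image, mem_ofPred_eq, and_assoc, eq_comm]

lemma faceBeta_bounds (hω : HasHeightsGE η (ω : Set (Euc m))) (hcard : 2 ≤ ω.card) :
    η / ω.card ≤ faceBetaMin m ω ∧ faceBetaMin m ω ≤ faceBetaMax m ω ∧
      faceBetaMax m ω ≤ simpDiam m ω := by
  classical
  rw [faceBetaMin, faceBetaMax, setOf_exists_subset_eq_image]
  refine le_csInf_image_le_csSup_image_le (Finset.exists_subset_card_eq (Nat.sub_le ω.card 1))
    fun t ⟨htω, htcard⟩ =>
      ⟨?_, le_rfl, infDist_centroid_le_diam (Finset.card_pos.1 (by lia)) htω⟩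
  obtain ⟨b, hb, rfl⟩ := exists_mem_eq_erase htω (by lia)
  exact hω.div_card_le_infDist_centroid (Finset.one_lt_card_iff_nontrivial.1 hcard) hb

lemma beta_bounds (hσ : HasHeightsGE η (σ : Set (Euc m))) (hη : 0 ≤ η) (hcard : 2 ≤ σ.card) :
    η / σ.card ≤ betaLow m σ ∧ betaLow m σ ≤ betaHigh m σ ∧ betaHigh m σ ≤ simpDiam m σ := by
  rw [betaLow, betaHigh, setOf_exists_subset_eq_image, setOf_exists_subset_eq_image]
  refine le_csInf_image_le_csSup_image_le ⟨σ, subset_rfl, hcard⟩ fun ω ⟨hωσ, hω⟩ => ?_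
  obtain ⟨hmin, hle, hmax⟩ := faceBeta_bounds
    (hσ.mono (Finset.coe_subset.2 hωσ) (Finset.one_lt_card_iff_nontrivial.1 hω)) hω
  refine ⟨le_trans ?_ hmin, hle, hmax.trans ?_⟩
  · gcongr
  · exact diam_mono (convexHull_mono (Finset.coe_subset.2 hωσ))
      (isBounded_convexHull.2 σ.finite_toSet.isBounded)

end Beta

section WhitneyScale

variable {ι : Type*} [Fintype ι] {Z : Set (EuclideanSpace ℝ ι)} {x y u v : EuclideanSpace ℝ ι}
  {k : ℤ}

lemma dist_coord_le_dist (x y : EuclideanSpace ℝ ι) (i : ι) : dist (x i) (y i) ≤ dist x y := by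
  simpa only [dist_eq_norm, PiLp.sub_apply] using PiLp.norm_apply_le (x - y) i

lemma dist_le_sqrt_card_mul {c : ℝ} (hc : 0 ≤ c) (h : ∀ i, dist (x i) (y i) ≤ c) :
    dist x y ≤ √(Fintype.card ι) * c := by
  rw [EuclideanSpace.dist_eq, ← Real.sqrt_sq hc, ← Real.sqrt_mul (Nat.cast_nonneg _)]
  gcongr
  calc ∑ i, dist (x i) (y i) ^ 2 ≤ ∑ _i : ι, c ^ 2 := by
        gcongr with i
        exact h i
    _ = Fintype.card ι * c ^ 2 := by
        rw [Finset.sum_const, Finset.card_univ, nsmul_eq_mul]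

lemma dist_le_of_mem_dyadicCell {p q : EuclideanSpace ℝ ι} (hp : p ∈ dyadicCell k y)
    (hq : q ∈ dyadicCell k y) : dist p q ≤ √(Fintype.card ι) * 2 ^ (-k) :=
  dist_le_sqrt_card_mul (by positivity) fun i => dist_le_of_mem_orderCell (hp i) (hq i)

/-- Every closed dyadic cell of level `k` that contains `x` lies at distance at least `√m 2⁻ᵏ`,
the diameter of a cube of level `k`, from `Z`. -/
def IsAdmissibleLevel (Z : Set (EuclideanSpace ℝ ι)) (k : ℤ) (x : EuclideanSpace ℝ ι) : Prop :=
  ∀ y, x ∈ dyadicCell k y → ∀ p ∈ dyadicCell k y, √(Fintype.card ι) * 2 ^ (-k) ≤ infDist p Z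

lemma IsAdmissibleLevel.of_mem (hx : IsAdmissibleLevel Z k x) (hxy : x ∈ dyadicCell k y) :
    IsAdmissibleLevel Z k y :=
  fun w hw => hx w (dyadicCell_subset_dyadicCell hw hxy)

lemma isAdmissibleLevel_of_le_infDist (h : √(Fintype.card ι) * 2 ^ (-k) * 2 ≤ infDist x Z) :
    IsAdmissibleLevel Z k x := fun y hx p hp => by
  linarith [dist_le_of_mem_dyadicCell hx hp, infDist_le_infDist_add_dist (s := Z) (x := x) (y := p)]

/-- The level of the Whitney decomposition of `Zᶜ` at `x`: the coarsest admissible one. -/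
def whitneyScale (Z : Set (EuclideanSpace ℝ ι)) (x : EuclideanSpace ℝ ι) : ℤ :=
  sInf {k | IsAdmissibleLevel Z k x}

variable [Nonempty ι]

lemma sqrt_card_pos : 0 < √(Fintype.card ι) := by
  rw [Real.sqrt_pos, Nat.cast_pos]
  exact Fintype.card_pos

lemma IsAdmissibleLevel.notMem_of_mem (hx : IsAdmissibleLevel Z k x) (hy : y ∈ dyadicCell k x) :
    y ∉ Z := fun hyZ => by
  have hle := hx x (self_mem_dyadicCell k x) y hy
  rw [infDist_zero_of_mem hyZ] at hle
  exact hle.not_gt (mul_pos sqrt_card_pos (by positivity))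

lemma isLeast_whitneyScale (hZ : IsClosed Z) (hne : Z.Nonempty) (hx : x ∉ Z) :
    IsLeast {k | IsAdmissibleLevel Z k x} (whitneyScale Z x) := by
  have hpos : 0 < infDist x Z / √(Fintype.card ι) :=
    div_pos ((hZ.notMem_iff_infDist_pos hne).1 hx) sqrt_card_pos
  obtain ⟨j, hjlt, hjle⟩ := exists_mem_Ioc_zpow hpos (one_lt_two : (1 : ℝ) < 2)
  have hadm : IsAdmissibleLevel Z (-j + 1) x := isAdmissibleLevel_of_le_infDist <| by
    rw [two_zpow_neg_add_one, neg_neg, mul_assoc, div_mul_cancel₀ _ two_ne_zero]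
    exact ((lt_div_iff₀' sqrt_card_pos).1 hjlt).le
  have hbdd : BddBelow {k | IsAdmissibleLevel Z k x} := by
    refine ⟨-(j + 1), fun k hk => neg_le.1 ?_⟩
    have hk := hk x (self_mem_dyadicCell k x) x (self_mem_dyadicCell k x)
    exact (zpow_le_zpow_iff_right₀ (one_lt_two : (1 : ℝ) < 2)).1
      (((le_div_iff₀' sqrt_card_pos).2 hk).trans hjle)
  exact ⟨Int.csInf_mem ⟨_, hadm⟩ hbdd, fun k hk => csInf_le hbdd hk⟩

lemma le_infDist_of_mem_dyadicCell (hZ : IsClosed Z) (hne : Z.Nonempty) (hv : v ∉ Z)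
    (hx : x ∈ dyadicCell (whitneyScale Z v) v) :
    √(Fintype.card ι) * 2 ^ (-whitneyScale Z v) ≤ infDist x Z :=
  (isLeast_whitneyScale hZ hne hv).1 v (self_mem_dyadicCell _ v) x hx

lemma whitneyScale_le_add_one (hZ : IsClosed Z) (hne : Z.Nonempty) (hv : v ∉ Z)
    (hu : u ∈ dyadicCell (whitneyScale Z v) v) : whitneyScale Z u ≤ whitneyScale Z v + 1 := by
  refine (isLeast_whitneyScale hZ hne ?_).2 (isAdmissibleLevel_of_le_infDist ?_)
  · exact (isLeast_whitneyScale hZ hne hv).1.notMem_of_mem hu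
  · rw [two_zpow_neg_add_one, mul_assoc, div_mul_cancel₀ _ two_ne_zero]
    exact le_infDist_of_mem_dyadicCell hZ hne hv hu

lemma infDist_le_four_mul (hZ : IsClosed Z) (hne : Z.Nonempty) (hv : v ∉ Z) :
    infDist v Z ≤ 4 * √(Fintype.card ι) * 2 ^ (-whitneyScale Z v) := by
  have hnot : ¬ IsAdmissibleLevel Z (whitneyScale Z v - 1) v := fun h =>
    (sub_one_lt _).not_ge ((isLeast_whitneyScale hZ hne hv).2 h)
  simp only [IsAdmissibleLevel, not_forall, not_le] at hnot
  obtain ⟨y, hvy, p, hp, hlt⟩ := hnot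
  have hstep := two_zpow_neg_add_one (whitneyScale Z v - 1)
  rw [sub_add_cancel, eq_div_iff two_ne_zero] at hstep
  have hdist := dist_le_of_mem_dyadicCell hvy hp
  rw [← hstep] at hlt hdist
  linarith [infDist_le_infDist_add_dist (s := Z) (x := v) (y := p)]

lemma isCellScale_whitneyScale (hZ : IsClosed Z) (hne : Z.Nonempty) :
    IsCellScale Zᶜ (whitneyScale Z) where
  mem_of_mem hx hy := (isLeast_whitneyScale hZ hne hx).1.notMem_of_mem hy
  mem_of_mem_coface hx hy :=
    ((isLeast_whitneyScale hZ hne hx).1.of_mem hy).notMem_of_mem (self_mem_dyadicCell _ _)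
  le_of_mem_coface hx hy := by
    have hadm := (isLeast_whitneyScale hZ hne hx).1.of_mem hy
    exact (isLeast_whitneyScale hZ hne (hadm.notMem_of_mem (self_mem_dyadicCell _ _))).2 hadm

end WhitneyScale

section SimplexScale

variable {ι : Type*} {U : Set (EuclideanSpace ℝ ι)} {n : EuclideanSpace ℝ ι → ℤ}
  {s : Finset (EuclideanSpace ℝ ι)} {u v : EuclideanSpace ℝ ι} {k l : ℤ} {t : ℝ}

lemma two_zpow_mul_mem_dyadicGrid (ht : t ∈ dyadicGrid (k + l)) :
    2 ^ k * t ∈ dyadicGrid l := by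
  obtain ⟨z, rfl⟩ := mem_dyadicGrid_iff.1 ht
  refine mem_dyadicGrid_iff.2 ⟨z, ?_⟩
  rw [mul_left_comm, ← zpow_add₀ two_ne_zero]
  ring_nf

lemma finite_setOf_forall_mem_dyadicGrid [Finite ι] (k : ℤ) (R : ℝ) :
    {x : EuclideanSpace ℝ ι | ∀ i, x i ∈ dyadicGrid k ∧ |x i| ≤ R}.Finite := by
  have hdisc : DiscreteTopology (dyadicGrid k) := by
    rw [dyadicGrid]
    infer_instance
  have hfin : {t : ℝ | t ∈ dyadicGrid k ∧ |t| ≤ R}.Finite :=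
    (finite_isBounded_inter_isClosed (SetLike.isDiscrete_iff_discreteTopology.2 hdisc)
      isBounded_closedBall (dyadicGrid k).isClosed_of_discrete).subset
      fun t ⟨htk, htR⟩ => ⟨mem_closedBall_zero_iff.2 htR, htk⟩
  exact (Set.Finite.pi' fun _ => hfin).preimage (WithLp.ofLp_injective 2).injOn

lemma IsCellCenter.two_zpow_mul_sub_mem (hu : IsCellCenter U n u) (hv : IsCellCenter U n v)
    (huv : u ∈ dyadicCell (n v) v) (hle : n u ≤ n v + 1) (i : ι) :
    2 ^ n v * (u i - v i) ∈ dyadicGrid 2 ∧ |2 ^ n v * (u i - v i)| ≤ 1 / 2 := by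
  constructor
  · exact two_zpow_mul_mem_dyadicGrid (sub_mem (dyadicGrid_mono (by lia) (hu.coord_mem i))
      (dyadicGrid_mono (by lia) (hv.coord_mem i)))
  · rw [abs_mul, abs_of_pos (by positivity), ← le_div_iff₀' (by positivity), ← Real.dist_eq]
    exact (hv.dist_le huv i).trans_eq (by rw [zpow_neg]; ring)

variable [Fintype ι]

lemma IsFlagTop.diam_convexHull_le (hv : IsFlagTop n s v) :
    diam (convexHull ℝ (s : Set (EuclideanSpace ℝ ι))) ≤ √(Fintype.card ι) * 2 ^ (-n v) :=
  diam_le_of_forall_dist_le (by positivity) fun _ hx _ hy =>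
    dist_le_of_mem_dyadicCell (hv.convexHull_subset hx) (hv.convexHull_subset hy)

lemma IsCellFlag.half_le_diam_convexHull (hU : IsCellScale U n) (hs : IsCellFlag U n s)
    (hv : IsFlagTop n s v) (hnt : s.Nontrivial) :
    2 ^ (-n v) / 2 ≤ diam (convexHull ℝ (s : Set (EuclideanSpace ℝ ι))) := by
  obtain ⟨u, hu, huv⟩ := hnt.exists_ne v
  obtain ⟨i, hi⟩ := (hs.isCellCenter v hv.1).exists_dist_eq
    ((hs.isCellCenter u hu).mem_cellBoundary hU (hs.isCellCenter v hv.1) (hv.2 hu) huv)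
  rw [← hi]
  exact (dist_coord_le_dist u v i).trans
    (dist_le_diam_convexHull (subset_convexHull ℝ _ hu) (subset_convexHull ℝ _ hv.1))

variable (ι) in
lemma exists_pos_forall_hasHeightsGE_of_isCellFlag : ∃ c > 0,
    ∀ (U : Set (EuclideanSpace ℝ ι)) (n : EuclideanSpace ℝ ι → ℤ), IsCellScale U n →
      (∀ v ∈ U, ∀ u ∈ dyadicCell (n v) v, n u ≤ n v + 1) →
        ∀ s v, IsCellFlag U n s → IsFlagTop n s v → s.Nontrivial →
          HasHeightsGE (c * 2 ^ (-n v)) (s : Set (EuclideanSpace ℝ ι)) := by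
  obtain ⟨c, hc, hheights⟩ :=
    exists_pos_forall_hasHeightsGE_of_finite (finite_setOf_forall_mem_dyadicGrid (ι := ι) 2 (1 / 2))
  refine ⟨c, hc, fun U n hU hn s v hs hv hnt => ?_⟩
  let f : EuclideanSpace ℝ ι →ᵃ[ℝ] EuclideanSpace ℝ ι :=
    (2 : ℝ) ^ n v • (AffineMap.id ℝ _ - AffineMap.const ℝ _ v)
  have hdist : ∀ x y, dist (f x) (f y) = 2 ^ n v * dist x y := fun x y => by
    simp [f, dist_smul₀]
  have hpos : (0 : ℝ) < 2 ^ n v := by positivity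
  have hinj := injective_of_dist_eq_mul hpos.ne' hdist
  rw [zpow_neg, ← div_eq_mul_inv]
  refine HasHeightsGE.of_image hpos f hdist hnt (hheights _ ?_ (Set.Nontrivial.image hnt hinj) ?_)
  · rintro _ ⟨u, hu, rfl⟩ i
    simpa [f] using (hs.isCellCenter u hu).two_zpow_mul_sub_mem (hs.isCellCenter v hv.1) (hv.2 hu)
      (hn v (hs.isCellCenter v hv.1).mem u (hv.2 hu)) i
  · exact ((hs.affineIndependent hU).map' f hinj).range.mono fun _ ⟨u, hu, hfu⟩ => ⟨⟨u, hu⟩, hfu⟩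

end SimplexScale

section WhitneySimplex

variable {m : ℕ} {A Z : Set (Euc m)} {x y : Euc m} {c r : ℝ} {σ ω ω₁ ω₂ : Finset (Euc m)}

lemma le_setDist (hA : A.Nonempty) (hZ : Z.Nonempty) (h : ∀ x ∈ A, r ≤ infDist x Z) :
    r ≤ setDist m A Z := by
  refine le_csInf (hA.image2 hZ) ?_
  rintro _ ⟨x, hx, z, hz, rfl⟩
  exact (h x hx).trans (infDist_le_dist_of_mem hz)

lemma setDist_le_infDist (hZ : Z.Nonempty) (hx : x ∈ A) : setDist m A Z ≤ infDist x Z := by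
  refine (le_infDist hZ).2 fun {z} hz => csInf_le ⟨0, ?_⟩ (mem_image2_of_mem hx hz)
  rintro _ ⟨x, -, z, -, rfl⟩
  exact dist_nonneg

lemma skel_flagComplex {U : Set (Euc m)} {n : Euc m → ℤ} (hU : IsCellScale U n) :
    skel m (flagComplex hU) m = U := by
  refine subset_antisymm (iUnion₂_subset fun s hs =>
    (isCellFlag_of_mem_flagComplex hs.1).convexHull_subset hU) fun x hx => ?_
  obtain ⟨s, hs, hcard, hxs⟩ := exists_mem_flagComplex_mem_convexHull (hU := hU) hx
  rw [Fintype.card_fin] at hcard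
  exact mem_iUnion₂.2 ⟨s, ⟨hs, hcard⟩, hxs⟩

/-- The simplex with vertex set `s` has size comparable to `r`, heights at least `c r`, and
distance to `Z` comparable to `r`, with the constants of the dyadic construction. -/
structure IsWhitneySimplex (Z : Set (Euc m)) (c r : ℝ) (s : Finset (Euc m)) : Prop where
  pos : 0 < r
  hasHeightsGE : HasHeightsGE (c * r) (s : Set (Euc m))
  half_le_simpDiam : r / 2 ≤ simpDiam m s
  simpDiam_le : simpDiam m s ≤ √m * r
  le_setDist : √m * r ≤ setDist m (convexHull ℝ (s : Set (Euc m))) Z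
  setDist_le : setDist m (convexHull ℝ (s : Set (Euc m))) Z ≤ 4 * √m * r

variable (m) in
lemma exists_pos_forall_isWhitneySimplex [NeZero m] : ∃ c > 0,
    ∀ (Z : Set (Euc m)) (hZ : IsClosed Z) (hne : Z.Nonempty),
      ∀ s ∈ (flagComplex (isCellScale_whitneyScale hZ hne)).faces, s.Nontrivial →
        ∃ r, IsWhitneySimplex Z c r s := by
  obtain ⟨c, hc, hheights⟩ := exists_pos_forall_hasHeightsGE_of_isCellFlag (Fin m)
  refine ⟨c, hc, fun Z hZ hne s hs hnt => ?_⟩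
  have hU := isCellScale_whitneyScale hZ hne
  have hflag := isCellFlag_of_mem_flagComplex hs
  obtain ⟨v, hv⟩ := hflag.exists_isFlagTop hU hnt.nonempty
  have hvZ : v ∉ Z := (hflag.isCellCenter v hv.1).mem
  have hvs := subset_convexHull ℝ (s : Set (Euc m)) hv.1
  have hcard : √m = √(Fintype.card (Fin m)) := by rw [Fintype.card_fin]
  refine ⟨2 ^ (-whitneyScale Z v), by positivity,
    hheights _ _ hU (fun _ hw _ => whitneyScale_le_add_one hZ hne hw) s v hflag hv hnt,
    hflag.half_le_diam_convexHull hU hv hnt, ?_, ?_, ?_⟩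
  · rw [hcard]
    exact hv.diam_convexHull_le
  · rw [hcard]
    exact le_setDist ⟨v, hvs⟩ hne fun x hx =>
      le_infDist_of_mem_dyadicCell hZ hne hvZ (hv.convexHull_subset hx)
  · rw [hcard]
    exact (setDist_le_infDist hne hvs).trans (infDist_le_four_mul hZ hne hvZ)

namespace IsWhitneySimplex

lemma simpDiam_pos (h : IsWhitneySimplex Z c r σ) : 0 < simpDiam m σ :=
  (half_pos h.pos).trans_le h.half_le_simpDiam

lemma setDist_le_simpDiam (h : IsWhitneySimplex Z c r σ) :
    setDist m (convexHull ℝ (σ : Set (Euc m))) Z ≤ 12 * √m * simpDiam m σ :=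
  calc setDist m (convexHull ℝ (σ : Set (Euc m))) Z ≤ 4 * √m * r := h.setDist_le
    _ ≤ 4 * √m * (3 * simpDiam m σ) := by
        gcongr
        linarith [h.half_le_simpDiam, h.simpDiam_pos]
    _ = 12 * √m * simpDiam m σ := by ring

lemma simpDiam_div_beta_bounds (h : IsWhitneySimplex Z c r σ) (hc : 0 < c) (hcard : σ.card = m + 1)
    (hm : m ≠ 0) : 1 / 2 < simpDiam m σ / betaHigh m σ ∧
      simpDiam m σ / betaHigh m σ ≤ simpDiam m σ / betaLow m σ ∧
      simpDiam m σ / betaLow m σ < √m * (m + 1) / c + 1 := by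
  have hr := h.pos
  obtain ⟨hlow, hle, hhigh⟩ := beta_bounds h.hasHeightsGE (by positivity) (by lia)
  rw [hcard, Nat.cast_add_one] at hlow
  have hlowpos : 0 < betaLow m σ := lt_of_lt_of_le (by positivity) hlow
  refine ⟨one_half_lt_one.trans_le ((one_le_div (hlowpos.trans_le hle)).2 hhigh),
    div_le_div_of_nonneg_left h.simpDiam_pos.le hlowpos hle, ?_⟩
  calc simpDiam m σ / betaLow m σ ≤ √m * r / (c * r / (m + 1)) := by
        gcongr
        exact h.simpDiam_le
    _ = √m * (m + 1) / c := by field_simp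
    _ < √m * (m + 1) / c + 1 := lt_add_one _

lemma exists_mem_inter_dist_add_dist_le (h : IsWhitneySimplex Z c r ω) (hc : 0 < c)
    (hcard : 3 ≤ ω.card) (hω₁ : ω₁ ⊆ ω) (hω₂ : ω₂ ⊆ ω) (hcard₁ : ω₁.card + 1 = ω.card)
    (hcard₂ : ω₂.card + 1 = ω.card) (hx : x ∈ convexHull ℝ (ω₁ : Set (Euc m)))
    (hy : y ∈ convexHull ℝ (ω₂ : Set (Euc m))) :
    ∃ v ∈ convexHull ℝ (ω₁ : Set (Euc m)) ∩ convexHull ℝ (ω₂ : Set (Euc m)),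
      dist x v + dist v y ≤ (1 + 2 * (√m / c)) * dist x y := by
  classical
  obtain ⟨a, ha, rfl⟩ := exists_mem_eq_erase hω₁ hcard₁
  obtain ⟨b, hb, rfl⟩ := exists_mem_eq_erase hω₂ hcard₂
  have hr := h.pos
  obtain ⟨v, hv, hle⟩ := h.hasHeightsGE.exists_mem_inter_dist_add_dist_le (by positivity) hcard
    ha hb hx hy
  refine ⟨v, hv, hle.trans ?_⟩
  gcongr (1 + 2 * ?_) * _
  calc simpDiam m ω / (c * r) ≤ √m * r / (c * r) := by
        gcongr
        exact h.simpDiam_le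
    _ = √m / c := mul_div_mul_right _ _ hr.ne'

end IsWhitneySimplex

lemma whitneyConclusions_flagComplex {n : Euc m → ℤ} {hU : IsCellScale Zᶜ n} (hm : m ≠ 0)
    (hc : 0 < c) (h : ∀ s ∈ (flagComplex hU).faces, s.Nontrivial → ∃ r, IsWhitneySimplex Z c r s) :
    WhitneyConclusions m (1 / 2) (√m * (m + 1) / c + 1) Z (flagComplex hU) := by
  refine ⟨fun s hs => ?_, skel_flagComplex hU, fun σ hσ hcard => ?_⟩
  · simpa only [Fintype.card_fin] using card_le_of_mem_flagComplex hs
  · obtain ⟨r, hr⟩ := h σ hσ (Finset.one_lt_card_iff_nontrivial.1 (by lia))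
    exact ⟨hr.simpDiam_le.trans hr.le_setDist, hr.setDist_le_simpDiam,
      hr.simpDiam_div_beta_bounds hc hcard hm⟩

end WhitneySimplex

/-- **Lemma (uniform quasiconvexity of pairs of faces in the Whitney triangulation).**
For every `m ≥ 2` there is `μ ≥ 1` depending only on `m` such that every nonempty proper
closed `Z ⊊ ℝ^m` admits a Whitney triangulation `Σ` of `ℝ^m ∖ Z` with the property:
for every `1 ≤ j ≤ m−1`, every `(j+1)`-simplex `ω ∈ Σ`, any two `j`-faces `ω₁, ω₂` of
`ω` and any `x ∈ ω₁`, `y ∈ ω₂`, there is `v ∈ ω₁ ∩ ω₂` with `|x−v| + |v−y| ≤ μ|x−y|`. -/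
theorem whitney_triangulation_face_path (m : ℕ) (hm : 2 ≤ m) :
    ∃ μ : ℝ, 1 ≤ μ ∧ ∃ D₁ D₂ : ℝ, 0 < D₁ ∧ 0 < D₂ ∧
      ∀ Z : Set (Euc m), IsClosed Z → Z.Nonempty → Z ≠ Set.univ →
        ∃ K : Geometry.SimplicialComplex ℝ (Euc m),
          WhitneyConclusions m D₁ D₂ Z K ∧
          ∀ j : ℕ, 1 ≤ j → j ≤ m - 1 →
            ∀ ω ∈ K.faces, ω.card = j + 2 →
              ∀ ω₁ ⊆ ω, ∀ ω₂ ⊆ ω, ω₁.card = j + 1 → ω₂.card = j + 1 →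
                ∀ x ∈ convexHull ℝ (ω₁ : Set (Euc m)),
                  ∀ y ∈ convexHull ℝ (ω₂ : Set (Euc m)),
                    ∃ v ∈ convexHull ℝ (ω₁ : Set (Euc m)) ∩ convexHull ℝ (ω₂ : Set (Euc m)),
                      dist x v + dist v y ≤ μ * dist x y := by
  have : NeZero m := ⟨by lia⟩
  obtain ⟨c, hc, hwhitney⟩ := exists_pos_forall_isWhitneySimplex m
  refine ⟨1 + 2 * (√m / c), le_add_of_nonneg_right (by positivity), 1 / 2,
    √m * (m + 1) / c + 1, by positivity, by positivity, fun Z hZ hne _ => ?_⟩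
  refine ⟨flagComplex (isCellScale_whitneyScale hZ hne),
    whitneyConclusions_flagComplex (by lia) hc (hwhitney Z hZ hne), ?_⟩
  intro j hj _ ω hω hcard ω₁ hω₁ ω₂ hω₂ hcard₁ hcard₂ x hx y hy
  obtain ⟨r, hr⟩ := hwhitney Z hZ hne ω hω (Finset.one_lt_card_iff_nontrivial.1 (by lia))
  exact hr.exists_mem_inter_dist_add_dist_le hc (by lia) hω₁ hω₂ (by lia) (by lia) hx hy

end
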